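/- Assume the probability measures μ₁,…,μ_n satisfy Assumption A and M⁻_{μ,𝔓} ≠ ∅. Let G : ℝ₊^n → [−∞, ∞) be upper semi-continuous with G(s₁,…,s_n) ≤ K(1 + s₁ + … + s_n) for some constant K. Then sup_{ℙ ∈ M⁻_{μ,𝔓}} E_ℙ[G] = inf{Σ_{i=0}^n ∫ u_i dμ_i : u_i : ℝ₊ → ℝ of linear growth and Δ_i : ℝ₊^i → ℝ₊ bounded measurable such that Σ_{i=0}^n u_i(S_i) + Σ_{i=0}^{n−1} Δ_i(S₁,…,S_i)(S_{i+1} − S_i) ≥ G(S) on 𝔓}, where μ₀ = δ_{s₀}; and this common value equals the superhedging price V_{μ,𝔓}(G) using static positions in call options priced by c_i(K) = ∫(x − K)⁺ μ_i(dx) and bounded nonnegative Δ_i. Further, if ∫ x μ_i(dx) = s₀ for all i = 1,…,n, the same equalities hold when the dynamic positions Δ_i : ℝ₊^i → ℝ are allowed to take both signs. -/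

import Mathlib

open MeasureTheory Set Filter Topology
open scoped ENNReal NNReal Classical

noncomputable section

namespace RobustFin

/-- Canonical path space: the values `S₀, S₁, …, S_n` of the asset. -/
abbrev Path (n : ℕ) := Fin (n + 1) → ℝ

/-- Paths starting at `s₀` with nonnegative coordinates: the canonical space `Ω`. -/
def Omega (n : ℕ) (s₀ : ℝ) : Set (Path n) := {ω | ω 0 = s₀ ∧ ∀ i, 0 ≤ ω i}

/-- The first `j` coordinates `S₁, …, S_j` of a path. -/
def restr {n : ℕ} (j : Fin n) (ω : Path n) : Fin j → ℝ :=
  fun i => ω ⟨(i : ℕ) + 1, by have h1 := i.isLt; have h2 := j.isLt; omega⟩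

/-- The coordinates `S₁, …, S_n` of a path. -/
def tailCoords {n : ℕ} (ω : Path n) : Fin n → ℝ := fun i => ω i.succ

/-- A dynamic trading strategy: bounded measurable positions `Δ_j(S₁,…,S_j)`. -/
structure Dyn (n : ℕ) where
  pos : (j : Fin n) → (Fin j → ℝ) → ℝ
  meas : ∀ j, Measurable (pos j)
  bdd : ∀ j, ∃ C, ∀ x, |pos j x| ≤ C

/-- No short selling: all dynamic positions are nonnegative. -/
def Dyn.Nonneg {n : ℕ} (D : Dyn n) : Prop := ∀ j x, 0 ≤ D.pos j x

/-- Gains from dynamic trading: `Σ_j Δ_j(S₁,…,S_j)(S_{j+1} − S_j)`. -/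
def Dyn.gains {n : ℕ} (D : Dyn n) (ω : Path n) : ℝ :=
  ∑ j : Fin n, D.pos j (restr j ω) * (ω j.succ - ω j.castSucc)

/-- A static option portfolio: a constant (cash) position plus a finite linear
combination of options with maturity indices `idx` and nonnegative strikes. -/
structure Static (n : ℕ) where
  const : ℝ
  m : ℕ
  coeff : Fin m → ℝ
  idx : Fin m → Fin n
  strike : Fin m → ℝ
  strike_nonneg : ∀ k, 0 ≤ strike k

/-- Payoff of the portfolio when the options are call options. -/
def Static.callPayoff {n : ℕ} (X : Static n) (ω : Path n) : ℝ :=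
  X.const + ∑ k, X.coeff k * max (ω (X.idx k).succ - X.strike k) 0

/-- Payoff of the portfolio when the options are put options. -/
def Static.putPayoff {n : ℕ} (X : Static n) (ω : Path n) : ℝ :=
  X.const + ∑ k, X.coeff k * max (X.strike k - ω (X.idx k).succ) 0

/-- Price of a static portfolio, given the unit option prices `c i K`;
this is the (unique) linear pricing functional determined by the prices. -/
def Static.price {n : ℕ} (X : Static n) (c : Fin n → ℝ → ℝ) : ℝ :=
  X.const + ∑ k, X.coeff k * c (X.idx k) (X.strike k)

/-- Expectation of a real payoff, valued in `EReal`, with the convention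
`∞ − ∞ = −∞` (in `EReal`, `⊤ - ⊤ = ⊥`). -/
def eexp {n : ℕ} (P : Measure (Path n)) (f : Path n → ℝ) : EReal :=
  ((∫⁻ ω, ENNReal.ofReal (f ω) ∂P : ℝ≥0∞) : EReal) -
    ((∫⁻ ω, ENNReal.ofReal (-(f ω)) ∂P : ℝ≥0∞) : EReal)

/-- The positive part of an extended real number, in `ℝ≥0∞`. -/
def posE (x : EReal) : ℝ≥0∞ := if x = ⊤ then ⊤ else ENNReal.ofReal x.toReal

/-- Expectation of an `EReal`-valued payoff, with the convention `∞ − ∞ = −∞`. -/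
def eexpE {n : ℕ} (P : Measure (Path n)) (f : Path n → EReal) : EReal :=
  ((∫⁻ ω, posE (f ω) ∂P : ℝ≥0∞) : EReal) - ((∫⁻ ω, posE (-(f ω)) ∂P : ℝ≥0∞) : EReal)

/-- A market calibrated model for the market with static payoffs `pay` (calls or puts),
prices `c` and prediction set `P`. -/
def Calibrated {n : ℕ} (pay : Static n → Path n → ℝ) (c : Fin n → ℝ → ℝ)
    (P : Set (Path n)) (Q : Measure (Path n)) : Prop :=
  IsProbabilityMeasure Q ∧ Q P = 1 ∧
    ∀ (X : Static n) (D : Dyn n), D.Nonneg →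
      eexp Q (fun ω => pay X ω + D.gains ω) ≤ (X.price c : EReal)

/-- A weak free lunch with vanishing risk. -/
def WFLVR {n : ℕ} (pay : Static n → Path n → ℝ) (c : Fin n → ℝ → ℝ)
    (P : Set (Path n)) : Prop :=
  ∃ (Xs : ℕ → Static n) (Ds : ℕ → Dyn n) (X : Static n) (D : Dyn n) (L : ℝ),
    (∀ k, (Ds k).Nonneg) ∧ D.Nonneg ∧
    (∀ ω ∈ P, Tendsto (fun k => pay (Xs k) ω + (Ds k).gains ω) atTop (nhds 0)) ∧
    (∀ k, ∀ ω ∈ P, pay X ω + D.gains ω ≤ pay (Xs k) ω + (Ds k).gains ω) ∧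
    Tendsto (fun k => (Xs k).price c) atTop (nhds L) ∧ L < 0

/-- A robust uniformly strong arbitrage. -/
def RobustArbitrage {n : ℕ} (pay : Static n → Path n → ℝ) (c : Fin n → ℝ → ℝ)
    (P : Set (Path n)) : Prop :=
  ∃ (X : Static n) (D : Dyn n), D.Nonneg ∧ X.price c < 0 ∧
    ∀ ω ∈ P, 0 ≤ pay X ω + D.gains ω

/-- The superhedging price of `G` over semi-static strategies (no short selling). -/
def V {n : ℕ} (pay : Static n → Path n → ℝ) (c : Fin n → ℝ → ℝ)
    (P : Set (Path n)) (G : Path n → EReal) : EReal :=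
  sInf {q : EReal | ∃ (X : Static n) (D : Dyn n), D.Nonneg ∧ q = (X.price c : EReal) ∧
    ∀ ω ∈ P, G ω ≤ ((pay X ω + D.gains ω : ℝ) : EReal)}

/-- The superhedging price of `G` when the dynamic positions may take both signs. -/
def Vsigned {n : ℕ} (pay : Static n → Path n → ℝ) (c : Fin n → ℝ → ℝ)
    (P : Set (Path n)) (G : Path n → EReal) : EReal :=
  sInf {q : EReal | ∃ (X : Static n) (D : Dyn n), q = (X.price c : EReal) ∧
    ∀ ω ∈ P, G ω ≤ ((pay X ω + D.gains ω : ℝ) : EReal)}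

/-- `Π_μ`: probability measures on the path space with marginals `δ_{s₀}, μ₁, …, μ_n`. -/
def PiMu {n : ℕ} (s₀ : ℝ) (μ : Fin n → Measure ℝ) : Set (Measure (Path n)) :=
  {π | IsProbabilityMeasure π ∧ π (Omega n s₀) = 1 ∧
       ∀ i : Fin n, π.map (fun ω => ω i.succ) = μ i}

/-- The coordinate process is a supermartingale in its natural filtration:
for every Borel `A ⊆ ℝ₊^j`, `∫ 1_A(S₁,…,S_j)(S_{j+1} − S_j) dπ ≤ 0`. -/
def IsSupermartingaleLaw {n : ℕ} (π : Measure (Path n)) : Prop :=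
  ∀ (j : Fin n) (A : Set (Fin j → ℝ)), MeasurableSet A →
    ∫ ω, Set.indicator A (fun _ => (1 : ℝ)) (restr j ω) * (ω j.succ - ω j.castSucc) ∂π ≤ 0

/-- `M⁻_μ`: calibrated supermartingale measures. -/
def MSet {n : ℕ} (s₀ : ℝ) (μ : Fin n → Measure ℝ) : Set (Measure (Path n)) :=
  {π ∈ PiMu s₀ μ | IsSupermartingaleLaw π}

/-- `M⁻_{μ,𝔓}`: calibrated supermartingale measures giving full mass to `P`. -/
def MSetP {n : ℕ} (s₀ : ℝ) (μ : Fin n → Measure ℝ) (P : Set (Path n)) :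
    Set (Measure (Path n)) :=
  {π ∈ MSet s₀ μ | π P = 1}

/-- Assumption A on the marginals. -/
def AssumptionA {n : ℕ} (s₀ : ℝ) (μ : Fin n → Measure ℝ) : Prop :=
  (∀ i, ∫ x, x ∂(μ i) ≤ s₀) ∧
  (∀ i j : Fin n, i ≤ j → ∫ x, x ∂(μ j) ≤ ∫ x, x ∂(μ i)) ∧
  (∀ φ : ℝ → ℝ, ConcaveOn ℝ Set.univ φ → Monotone φ → (∀ x, 0 ≤ φ x) →
    ∀ i j : Fin n, i ≤ j → ∫ x, φ x ∂(μ j) ≤ ∫ x, φ x ∂(μ i))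

/-- Condition C (i): each `c_i` is nonnegative, convex and nonincreasing on `ℝ₊`. -/
def CondC1 {n : ℕ} (c : Fin n → ℝ → ℝ) : Prop :=
  ∀ i, (∀ x, 0 ≤ x → 0 ≤ c i x) ∧ ConvexOn ℝ (Set.Ici 0) (c i) ∧ AntitoneOn (c i) (Set.Ici 0)

/-- Condition C (ii): `s₀ ≥ c₁(0) ≥ … ≥ c_n(0) ≥ 0` and `c_i'(0+) ≥ −1`
(the latter expressed, for convex `c_i`, through the slopes at `0`). -/
def CondC2 {n : ℕ} (s₀ : ℝ) (c : Fin n → ℝ → ℝ) : Prop :=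
  (∀ i, c i 0 ≤ s₀) ∧ (∀ i j : Fin n, i ≤ j → c j 0 ≤ c i 0) ∧ (∀ i, 0 ≤ c i 0) ∧
    (∀ i, ∀ K : ℝ, 0 < K → c i 0 - K ≤ c i K)

/-- Condition C (iii): `c_i(K) → 0` as `K → ∞`. -/
def CondC3 {n : ℕ} (c : Fin n → ℝ → ℝ) : Prop :=
  ∀ i, Tendsto (c i) atTop (nhds 0)

/-- Condition C (iv): for every `x ≥ 0`, `c_i(0) − c_i(x)` is nonincreasing in `i`. -/
def CondC4 {n : ℕ} (c : Fin n → ℝ → ℝ) : Prop :=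
  ∀ x : ℝ, 0 ≤ x → ∀ i j : Fin n, i ≤ j → c j 0 - c j x ≤ c i 0 - c i x

/-- Condition C. -/
def CondC {n : ℕ} (s₀ : ℝ) (c : Fin n → ℝ → ℝ) : Prop :=
  CondC1 c ∧ CondC2 s₀ c ∧ CondC3 c ∧ CondC4 c

/-- Condition P (i). -/
def CondP1 {n : ℕ} (p : Fin n → ℝ → ℝ) : Prop :=
  ∀ i, (∀ x, 0 ≤ x → 0 ≤ p i x) ∧ ConvexOn ℝ (Set.Ici 0) (p i) ∧ MonotoneOn (p i) (Set.Ici 0)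

/-- Condition P (ii): `s₀ ≥ lim (x − p₁(x)) ≥ … ≥ 0` and `0 ≤ p_i'(0+) ≤ 1`. -/
def CondP2 {n : ℕ} (s₀ : ℝ) (p : Fin n → ℝ → ℝ) : Prop :=
  (∃ L : Fin n → ℝ,
    (∀ i, Tendsto (fun x => x - p i x) atTop (nhds (L i))) ∧
    (∀ i, L i ≤ s₀) ∧ (∀ i j : Fin n, i ≤ j → L j ≤ L i) ∧ (∀ i, 0 ≤ L i)) ∧
  (∃ d : Fin n → ℝ,
    (∀ i, Tendsto (fun K => (p i K - p i 0) / K) (nhdsWithin 0 (Set.Ioi 0)) (nhds (d i))) ∧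
    (∀ i, 0 ≤ d i ∧ d i ≤ 1))

/-- Condition P (iii): `p_i(K) → 0` as `K → 0` (within `ℝ₊`). -/
def CondP3 {n : ℕ} (p : Fin n → ℝ → ℝ) : Prop :=
  ∀ i, Tendsto (p i) (nhdsWithin 0 (Set.Ici 0)) (nhds 0)

/-- Condition P (iv): `p_i(x)` is nondecreasing in `i`. -/
def CondP4 {n : ℕ} (p : Fin n → ℝ → ℝ) : Prop :=
  ∀ x : ℝ, 0 ≤ x → ∀ i j : Fin n, i ≤ j → p i x ≤ p j x

/-- Condition P. -/
def CondP {n : ℕ} (s₀ : ℝ) (p : Fin n → ℝ → ℝ) : Prop :=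
  CondP1 p ∧ CondP2 s₀ p ∧ CondP3 p ∧ CondP4 p

/-- The measures `μ_i` defined from the put prices by `μ_i([0,K]) = p_i'(K)`;
equivalently, `p_i(K) = ∫ (K − x)⁺ μ_i(dx)`. -/
def PutPricesFrom {n : ℕ} (p : Fin n → ℝ → ℝ) (μ : Fin n → Measure ℝ) : Prop :=
  (∀ i, IsProbabilityMeasure (μ i)) ∧ (∀ i, μ i (Set.Iio 0) = 0) ∧
  (∀ i, Integrable (fun x => x) (μ i)) ∧
  (∀ i, ∀ K : ℝ, 0 ≤ K → p i K = ∫ x, max (K - x) 0 ∂(μ i))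

/-- The path `(s₀, s₁, …, s_i, x, s_{i+2}, …, s_n)`. -/
def mkPath {n : ℕ} (s₀ : ℝ) (i : Fin n) (s : Fin i → ℝ) (x : ℝ)
    (t : Fin (n - ((i : ℕ) + 1)) → ℝ) : Path n := fun j =>
  if h0 : (j : ℕ) = 0 then s₀
  else if h1 : (j : ℕ) ≤ (i : ℕ) then
    s ⟨(j : ℕ) - 1, by have := j.isLt; have := i.isLt; omega⟩
  else if h2 : (j : ℕ) = (i : ℕ) + 1 then x
  else t ⟨(j : ℕ) - (i : ℕ) - 2, by have := j.isLt; have := i.isLt; omega⟩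

/-- The family `β_i : ℝ₊^i → ℝ` defined recursively by `β_n = 0` and
`β_i(s₁,…,s_i) = (sup_{s_{i+2},…,s_n} limsup_{x→∞} ((β_{i+1}(s₁,…,s_i,x)
 + G(s₁,…,s_i,x,s_{i+2},…,s_n)/x)·1_𝔓)) ∨ 0`. -/
def IsBetaFamily {n : ℕ} (s₀ : ℝ) (P : Set (Path n)) (G : (Fin n → ℝ) → EReal)
    (β : (i : Fin (n + 1)) → (Fin i → ℝ) → ℝ) : Prop :=
  (∀ s, β (Fin.last n) s = 0) ∧
  ∀ (i : Fin n) (s : Fin i → ℝ), (∀ k, 0 ≤ s k) →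
    (β ⟨(i : ℕ), by have := i.isLt; omega⟩ s : EReal) =
      max 0 (⨆ (t : Fin (n - ((i : ℕ) + 1)) → ℝ) (_ : ∀ k, 0 ≤ t k),
        Filter.limsup (fun x : ℝ =>
          if mkPath s₀ i s x t ∈ P then
            ((β ⟨(i : ℕ) + 1, by have := i.isLt; omega⟩ (Fin.snoc s x) : ℝ) : EReal)
              + G (tailCoords (mkPath s₀ i s x t)) * ((x⁻¹ : ℝ) : EReal)
          else 0) Filter.atTop)

/-- Gains of the dynamic strategy `(β_i)`: `β₀(S₁ − s₀) + Σ_i β_i(S₁,…,S_i)(S_{i+1} − S_i)`. -/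
def gainsOf {n : ℕ} (β : (i : Fin (n + 1)) → (Fin i → ℝ) → ℝ) (ω : Path n) : ℝ :=
  ∑ j : Fin n, β ⟨(j : ℕ), by have := j.isLt; omega⟩ (restr j ω) * (ω j.succ - ω j.castSucc)

/-- The penalty function `λ_𝔓(s₁,…,s_n) = (1 + s₁ + … + s_n)·1{(s₁,…,s_n) ∉ 𝔓}`. -/
def lambdaP {n : ℕ} (P : Set (Path n)) (ω : Path n) : ℝ :=
  if ω ∈ P then 0 else 1 + ∑ i : Fin n, ω i.succ

/-- `min(s₀, s₁, …, s_m)`. -/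
def pmin {m : ℕ} (s₀ : ℝ) (s : Fin m → ℝ) : ℝ :=
  Finset.univ.inf' Finset.univ_nonempty
    (fun j : Fin (m + 1) =>
      if h : (j : ℕ) = 0 then s₀ else s ⟨(j : ℕ) - 1, by have := j.isLt; omega⟩)

/-- `max(s₀, s₁, …, s_m)`. -/
def pmax {m : ℕ} (s₀ : ℝ) (s : Fin m → ℝ) : ℝ :=
  Finset.univ.sup' Finset.univ_nonempty
    (fun j : Fin (m + 1) =>
      if h : (j : ℕ) = 0 then s₀ else s ⟨(j : ℕ) - 1, by have := j.isLt; omega⟩)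


/-- Cost `Σ_{i=0}^n ∫ u_i dμ_i` of a vector of static functions, with `μ₀ = δ_{s₀}`. -/
def linGrowthCost {n : ℕ} (s₀ : ℝ) (μ : Fin n → Measure ℝ) (u : Fin (n + 1) → ℝ → ℝ) : ℝ :=
  u 0 s₀ + ∑ i : Fin n, ∫ x, u i.succ x ∂(μ i)

/-!
The bound of expectations by hedging costs is integration: supermartingale increments have
nonpositive weighted means, and vanishing ones when all marginals have mean `s₀`.

For the converse, let `v` be at most the superhedging price of `G`, and consider the linear-growth
payoffs that can be superhedged from calls (a cone, with its prices) and those that dominate `G`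
on `𝔓` (a convex set, with the constant `v`). By Hahn–Banach there is a linear functional below the
prices of the former and above `v` on the latter. It is positive, and as calls with large strikes
cost almost nothing and dominate the tails of all linear-growth payoffs, no mass escapes to
infinity: by Riesz representation the functional is integration against a measure. The prices of
constants and calls fix total mass and marginals, the gains of dynamic strategies force the
supermartingale property, and the distance to `𝔓`, which can be superhedged for free, forces the
measure to live on `𝔓`. Finally `G`, being upper semicontinuous, is an infimum of continuous payoffs
of linear growth, so its expectation is at least `v`.
-/

section HahnBanach

open scoped Pointwise

variable {E : Type*} [AddCommGroup E] [Module ℝ E]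

theorem exists_linearMap_le_of_pointedCone (A : PointedCone ℝ (E × ℝ))
    (hdom : ∀ x, ∃ a, (x, a) ∈ A) (hzero : ∀ a, ((0 : E), a) ∈ A → 0 ≤ a) :
    ∃ L : E →ₗ[ℝ] ℝ, ∀ z ∈ A, L z.1 ≤ z.2 := by
  let f : (E × ℝ) →ₗ.[ℝ] ℝ :=
    ⟨(⊥ : Submodule ℝ E).prod ⊤, (LinearMap.snd ℝ E ℝ).domRestrict _⟩
  have hf : ∀ z : f.domain, (z : E × ℝ) ∈ A → 0 ≤ f z := fun ⟨⟨x, a⟩, hx, _⟩ hz => by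
    obtain rfl : x = 0 := hx
    exact hzero a hz
  obtain ⟨g, hgf, hgA⟩ := riesz_extension A f hf fun ⟨x, b⟩ => by
    obtain ⟨a, ha⟩ := hdom x
    exact ⟨⟨(0, a - b), by simp [f]⟩, by simpa using ha⟩
  refine ⟨-(g ∘ₗ LinearMap.inl ℝ E ℝ), fun z hz => ?_⟩
  have hsnd : g (0, z.2) = z.2 := hgf ⟨(0, z.2), by simp [f]⟩
  have hsplit : g z = g (z.1, 0) + g (0, z.2) := by simp [← map_add]
  have : 0 ≤ g z := hgA z hz
  simp only [LinearMap.neg_apply, LinearMap.comp_apply, LinearMap.inl_apply]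
  linarith

/-- The cone of all `z` that some nonnegative multiple of an element of `T` pushes into `S`. It
contains `S` and `-T`, so lying below it amounts to lying below `S` and above `T`. -/
def sandwichCone (S : PointedCone ℝ (E × ℝ)) {T : Set (E × ℝ)} (hT : Convex ℝ T)
    (hne : T.Nonempty) : PointedCone ℝ (E × ℝ) where
  carrier := {z | ∃ r : ℝ, 0 ≤ r ∧ ∃ y ∈ r • T, z + y ∈ S}
  zero_mem' := ⟨0, le_rfl, 0, by simp [zero_smul_set hne], by simp⟩
  add_mem' := by
    rintro z z' ⟨r, hr, y, hy, hz⟩ ⟨r', hr', y', hy', hz'⟩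
    refine ⟨r + r', add_nonneg hr hr', y + y', ?_, add_add_add_comm z z' y y' ▸ add_mem hz hz'⟩
    exact hT.add_smul hr hr' ▸ add_mem_add hy hy'
  smul_mem' := by
    rintro c z ⟨r, hr, y, hy, hz⟩
    refine ⟨c * r, mul_nonneg c.2 hr, (c : ℝ) • y, ?_, smul_add c z y ▸ S.smul_mem c.2 hz⟩
    exact mul_smul (c : ℝ) r T ▸ smul_mem_smul_set hy

/-- Mazur–Orlicz: a linear functional separates a convex set from a cone lying above it. -/
theorem exists_linearMap_between (S : PointedCone ℝ (E × ℝ)) {T : Set (E × ℝ)}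
    (hT : Convex ℝ T) (hne : T.Nonempty) (hdom : ∀ x, ∃ a, (x, a) ∈ S)
    (hTS : ∀ z ∈ T, ∀ a, (z.1, a) ∈ S → z.2 ≤ a) :
    ∃ L : E →ₗ[ℝ] ℝ, (∀ z ∈ S, L z.1 ≤ z.2) ∧ ∀ z ∈ T, z.2 ≤ L z.1 := by
  have hzeroS : ∀ a, ((0 : E), a) ∈ S → 0 ≤ a := by
    intro a ha
    obtain ⟨z, hz⟩ := hne
    obtain ⟨b, hb⟩ := hdom z.1
    by_contra! hneg
    obtain ⟨k, hk⟩ := exists_nat_gt ((b - z.2) / -a)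
    have hk' := hTS z hz (b + k * a) (by
      simpa using add_mem hb (S.nsmul_mem ha k))
    rw [div_lt_iff₀ (by linarith)] at hk
    linarith
  obtain ⟨L, hL⟩ := exists_linearMap_le_of_pointedCone (sandwichCone S hT hne)
    (fun x => (hdom x).imp fun a ha => ⟨0, le_rfl, 0, by simp [zero_smul_set hne], by simpa⟩) (by
      rintro a ⟨r, hr, _, ⟨z, hz, rfl⟩, hmem⟩
      rcases hr.eq_or_lt with rfl | hr
      · exact hzeroS a (by simpa using hmem)
      · have hscale : (z.1, r⁻¹ * a + z.2) = r⁻¹ • (((0 : E), a) + r • z) := by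
          ext <;> simp [hr.ne']
        have := hTS z hz _ (hscale ▸ S.smul_mem (inv_nonneg.2 hr.le) hmem)
        exact (mul_nonneg_iff_of_pos_left (inv_pos.2 hr)).1 (by linarith))
  refine ⟨L, fun z hz => hL z ⟨0, le_rfl, 0, by simp [zero_smul_set hne], by simpa⟩, fun z hz => ?_⟩
  have := hL (-z) ⟨1, zero_le_one, z, by simpa using hz, by simp⟩
  simpa using this

end HahnBanach

section GrowthSpace

open Asymptotics CompactlySupported

variable {X : Type*} [TopologicalSpace X]

/-- The continuous real functions dominated by a multiple of the weight `w`. -/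
def growthSpace (w : C(X, ℝ)) : Submodule ℝ C(X, ℝ) where
  carrier := {f | f =O[⊤] w}
  zero_mem' := isBigO_zero w ⊤
  add_mem' hf hg := hf.add hg
  smul_mem' a _ hf := hf.const_mul_left a

variable {w : C(X, ℝ)}

theorem mem_growthSpace_iff {f : C(X, ℝ)} : f ∈ growthSpace w ↔ ∃ C, ∀ x, |f x| ≤ C * |w x| :=
  isBigO_top

theorem growthSpace.exists_abs_le (hw : ∀ x, 1 ≤ w x) (f : growthSpace w) :
    ∃ C, 0 ≤ C ∧ ∀ x, |f.1 x| ≤ C * w x := by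
  obtain ⟨C, hC⟩ := mem_growthSpace_iff.1 f.2
  refine ⟨|C|, abs_nonneg C, fun x => (hC x).trans ?_⟩
  rw [abs_of_nonneg (zero_le_one.trans (hw x))]
  exact mul_le_mul_of_nonneg_right (le_abs_self C) (zero_le_one.trans (hw x))

theorem mem_growthSpace_of_hasCompactSupport (hw : ∀ x, 1 ≤ w x) {f : C(X, ℝ)}
    (hf : HasCompactSupport f) : f ∈ growthSpace w := by
  obtain ⟨C, hC⟩ := hf.exists_bound_of_continuous f.continuous
  refine mem_growthSpace_iff.2 ⟨C, fun x => (hC x).trans ?_⟩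
  exact le_mul_of_one_le_right ((norm_nonneg _).trans (hC x)) ((hw x).trans (le_abs_self _))

/-- The inclusion of the compactly supported functions into a growth space. -/
def compactlySupportedInclusion (hw : ∀ x, 1 ≤ w x) : C_c(X, ℝ) →ₗ[ℝ] growthSpace w where
  toFun f := ⟨f, mem_growthSpace_of_hasCompactSupport hw f.hasCompactSupport⟩
  map_add' _ _ := rfl
  map_smul' _ _ := rfl

/-- The product `f * φ`, which truncates `f` to the support of `φ`. -/
def truncate (φ : C_c(X, ℝ)) (f : C(X, ℝ)) : C_c(X, ℝ) :=
  ⟨f * φ.toContinuousMap, φ.hasCompactSupport.mul_left⟩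

@[simp]
theorem truncate_apply (φ : C_c(X, ℝ)) (f : C(X, ℝ)) (x : X) : truncate φ f x = f x * φ x := rfl

theorem growthSpace.map_le_map {L : growthSpace w →ₗ[ℝ] ℝ}
    (hL : ∀ f, (∀ x, 0 ≤ f.1 x) → 0 ≤ L f) {f g : growthSpace w} (h : ∀ x, f.1 x ≤ g.1 x) :
    L f ≤ L g := by
  have := hL (g - f) fun x => sub_nonneg.2 (h x)
  rwa [map_sub, sub_nonneg] at this

variable {L : growthSpace w →ₗ[ℝ] ℝ} {φ : ℕ → C_c(X, ℝ)}

theorem tendsto_apply_truncate (hw : ∀ x, 1 ≤ w x) (hL : ∀ f, (∀ x, 0 ≤ f.1 x) → 0 ≤ L f)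
    (hφ : ∀ k x, φ k x ∈ Icc 0 1)
    (htight : Tendsto (fun k => L (compactlySupportedInclusion hw (truncate (φ k) w))) atTop
      (𝓝 (L ⟨w, isBigO_refl w ⊤⟩))) (f : growthSpace w) :
    Tendsto (fun k => L (compactlySupportedInclusion hw (truncate (φ k) f))) atTop (𝓝 (L f)) := by
  obtain ⟨C, -, hC⟩ := growthSpace.exists_abs_le hw f
  set W : growthSpace w := ⟨w, isBigO_refl w ⊤⟩
  let ι := compactlySupportedInclusion hw
  have hbound : ∀ k x, |f.1 x - f.1 x * φ k x| ≤ C * (w x - w x * φ k x) := by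
    intro k x
    have hsub : 0 ≤ 1 - φ k x := sub_nonneg.2 (hφ k x).2
    calc |f.1 x - f.1 x * φ k x| = |f.1 x| * (1 - φ k x) := by
          rw [← mul_one_sub, abs_mul, abs_of_nonneg hsub]
      _ ≤ C * w x * (1 - φ k x) := mul_le_mul_of_nonneg_right (hC x) hsub
      _ = C * (w x - w x * φ k x) := by ring
  have hdist : ∀ k, |L f - L (ι (truncate (φ k) f))| ≤ C * (L W - L (ι (truncate (φ k) w))) := by
    intro k
    rw [← map_sub, ← map_sub, ← smul_eq_mul, ← map_smul, abs_le, ← map_neg]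
    exact ⟨growthSpace.map_le_map hL fun x => (abs_le.1 (hbound k x)).1,
      growthSpace.map_le_map hL fun x => (abs_le.1 (hbound k x)).2⟩
  have hzero : Tendsto (fun k => C * (L W - L (ι (truncate (φ k) w)))) atTop (𝓝 0) := by
    simpa using (htight.const_sub (L W)).const_mul C
  refine tendsto_iff_dist_tendsto_zero.2
    (squeeze_zero (fun _ => dist_nonneg) (fun k => ?_) hzero)
  rw [dist_comm]
  exact hdist k

variable [MeasurableSpace X] [BorelSpace X]

theorem integrable_weight_of_integral_eq {Q : Measure X} [IsFiniteMeasureOnCompacts Q]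
    (hw : ∀ x, 1 ≤ w x) (hL : ∀ f, (∀ x, 0 ≤ f.1 x) → 0 ≤ L f)
    (hQ : ∀ g, ∫ x, g x ∂Q = L (compactlySupportedInclusion hw g))
    (hφ : ∀ k x, φ k x ∈ Icc 0 1) (hφ1 : ∀ x, Tendsto (fun k => φ k x) atTop (𝓝 1)) :
    Integrable w Q := by
  have hw0 : ∀ x, 0 ≤ w x := fun x => zero_le_one.trans (hw x)
  refine ⟨w.continuous.aestronglyMeasurable, ?_⟩
  rw [hasFiniteIntegral_iff_ofReal (Eventually.of_forall hw0)]
  have hle : ∀ k, ∫⁻ x, ENNReal.ofReal (truncate (φ k) w x) ∂Q ≤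
      ENNReal.ofReal (L ⟨w, isBigO_refl w ⊤⟩) := by
    intro k
    rw [← ofReal_integral_eq_lintegral_ofReal (truncate (φ k) w).integrable
      (Eventually.of_forall fun x => mul_nonneg (hw0 x) (hφ k x).1), hQ]
    exact ENNReal.ofReal_le_ofReal <| growthSpace.map_le_map hL fun x =>
      mul_le_of_le_one_right (hw0 x) (hφ k x).2
  have hlim : ∀ x, Tendsto (fun k => ENNReal.ofReal (truncate (φ k) w x)) atTop
      (𝓝 (ENNReal.ofReal (w x))) := fun x =>
    ENNReal.tendsto_ofReal (by simpa using (hφ1 x).const_mul (w x))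
  calc ∫⁻ x, ENNReal.ofReal (w x) ∂Q
      = ∫⁻ x, liminf (fun k => ENNReal.ofReal (truncate (φ k) w x)) atTop ∂Q :=
        lintegral_congr fun x => (hlim x).liminf_eq.symm
    _ ≤ liminf (fun k => ∫⁻ x, ENNReal.ofReal (truncate (φ k) w x) ∂Q) atTop :=
        lintegral_liminf_le fun k => (truncate (φ k) w).continuous.measurable.ennreal_ofReal
    _ ≤ ENNReal.ofReal (L ⟨w, isBigO_refl w ⊤⟩) :=
        liminf_le_of_le (by isBoundedDefault) fun b hb => by
          obtain ⟨k, hk⟩ := hb.exists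
          exact hk.trans (hle k)
    _ < ∞ := ENNReal.ofReal_lt_top

variable [T2Space X] [LocallyCompactSpace X]

/-- A positive functional on a growth space is an integral once its mass of the weight does not
escape to infinity. -/
theorem exists_measure_integral_eq (hw : ∀ x, 1 ≤ w x) (hL : ∀ f, (∀ x, 0 ≤ f.1 x) → 0 ≤ L f)
    (hφ : ∀ k x, φ k x ∈ Icc 0 1) (hφ1 : ∀ x, Tendsto (fun k => φ k x) atTop (𝓝 1))
    (htight : Tendsto (fun k => L (compactlySupportedInclusion hw (truncate (φ k) w))) atTop
      (𝓝 (L ⟨w, isBigO_refl w ⊤⟩))) :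
    ∃ Q : Measure X, ∀ f : growthSpace w, Integrable f.1 Q ∧ ∫ x, f.1 x ∂Q = L f := by
  let Λ : C_c(X, ℝ) →ₚ[ℝ] ℝ := PositiveLinearMap.mk₀ (L ∘ₗ compactlySupportedInclusion hw)
    fun g hg => hL _ hg
  have hΛ : ∀ g, ∫ x, g x ∂(RealRMK.rieszMeasure Λ) = L (compactlySupportedInclusion hw g) :=
    RealRMK.integral_rieszMeasure Λ
  have hwint := integrable_weight_of_integral_eq hw hL hΛ hφ hφ1
  refine ⟨RealRMK.rieszMeasure Λ, fun f => ?_⟩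
  obtain ⟨C, -, hC⟩ := growthSpace.exists_abs_le hw f
  have hlim := tendsto_integral_of_dominated_convergence (F := fun k x => truncate (φ k) f x)
    (f := f.1) (fun x => C * w x)
    (fun k => (truncate (φ k) f).continuous.aestronglyMeasurable) (hwint.const_mul C)
    (fun k => Eventually.of_forall fun x => by
      refine le_trans ?_ (hC x)
      rw [truncate_apply, Real.norm_eq_abs, abs_mul, abs_of_nonneg (hφ k x).1]
      exact mul_le_of_le_one_right (abs_nonneg _) (hφ k x).2)
    (Eventually.of_forall fun x => by simpa using (hφ1 x).const_mul (f.1 x))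
  simp_rw [hΛ] at hlim
  exact ⟨(hwint.const_mul C).mono' f.1.continuous.aestronglyMeasurable (Eventually.of_forall hC),
    tendsto_nhds_unique hlim (tendsto_apply_truncate hw hL hφ htight f)⟩

end GrowthSpace

section WeightedLaw

open scoped BoundedContinuousFunction

theorem measure_le_of_forall_boundedContinuous_lintegral_le {Y : Type*} [TopologicalSpace Y]
    [MeasurableSpace Y] [BorelSpace Y] [HasOuterApproxClosed Y] {ν ν' : Measure Y}
    [IsFiniteMeasure ν] [IsFiniteMeasure ν'] [ν.WeaklyRegular]
    (h : ∀ f : Y →ᵇ ℝ≥0, (∀ y, f y ≤ 1) → ∫⁻ y, f y ∂ν ≤ ∫⁻ y, f y ∂ν') : ν ≤ ν' := by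
  have hclosed : ∀ F, IsClosed F → ν F ≤ ν' F := fun F hF =>
    le_of_tendsto_of_tendsto' (HasOuterApproxClosed.tendsto_lintegral_apprSeq hF ν)
      (HasOuterApproxClosed.tendsto_lintegral_apprSeq hF ν')
      fun k => h _ (HasOuterApproxClosed.apprSeq_apply_le_one hF k)
  refine Measure.le_iff.2 fun A hA => ?_
  rw [hA.measure_eq_iSup_isClosed_of_ne_top (measure_ne_top ν A)]
  exact iSup₂_le fun F hFA => iSup_le fun hF => (hclosed F hF).trans (measure_mono hFA)

variable {Ω Y : Type*} [MeasurableSpace Ω] [MeasurableSpace Y] {Q : Measure Ω} {r : Ω → Y}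
  {Z : Ω → ℝ}

/-- The law of `r` under the measure with density `Z⁺` with respect to `Q`. It turns statements
about `∫ g(r) Z dQ` into a comparison of the laws weighted by `Z` and by `-Z`. -/
def weightedLaw (Q : Measure Ω) (r : Ω → Y) (Z : Ω → ℝ) : Measure Y :=
  (Q.withDensity fun ω => ENNReal.ofReal (Z ω)).map r

theorem lintegral_weightedLaw (hr : Measurable r) (hZ : AEMeasurable Z Q) {g : Y → ℝ}
    (hg : Measurable g) (hg0 : ∀ y, 0 ≤ g y) :
    ∫⁻ y, ENNReal.ofReal (g y) ∂(weightedLaw Q r Z) =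
      ∫⁻ ω, ENNReal.ofReal (g (r ω) * Z ω) ∂Q := by
  have hgr : AEMeasurable (fun ω => ENNReal.ofReal (g (r ω))) Q :=
    (hg.comp hr).ennreal_ofReal.aemeasurable
  rw [weightedLaw, lintegral_map hg.ennreal_ofReal hr,
    lintegral_withDensity_eq_lintegral_mul₀ hZ.ennreal_ofReal hgr]
  exact lintegral_congr fun ω => by rw [Pi.mul_apply, mul_comm, ENNReal.ofReal_mul (hg0 _)]

theorem isFiniteMeasure_weightedLaw (hZ : Integrable Z Q) : IsFiniteMeasure (weightedLaw Q r Z) :=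
  have := isFiniteMeasure_withDensity_ofReal hZ.2
  Measure.isFiniteMeasure_map _ _

theorem integrable_comp_mul (hr : Measurable r) (hZ : Integrable Z Q) {g : Y → ℝ}
    (hg : Measurable g) {C : ℝ} (hC : ∀ y, |g y| ≤ C) :
    Integrable (fun ω => g (r ω) * Z ω) Q :=
  hZ.bdd_mul (c := C) (hg.comp hr).aestronglyMeasurable (Eventually.of_forall fun _ => hC _)

theorem integral_comp_mul_nonpos_iff (hr : Measurable r) (hZ : Integrable Z Q) {g : Y → ℝ}
    (hg : Measurable g) (hg0 : ∀ y, 0 ≤ g y) {C : ℝ} (hC : ∀ y, g y ≤ C) :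
    ∫ ω, g (r ω) * Z ω ∂Q ≤ 0 ↔ ∫⁻ y, ENNReal.ofReal (g y) ∂(weightedLaw Q r Z) ≤
      ∫⁻ y, ENNReal.ofReal (g y) ∂(weightedLaw Q r (-Z)) := by
  have hint : Integrable (fun ω => g (r ω) * Z ω) Q :=
    integrable_comp_mul hr hZ hg fun y => (abs_of_nonneg (hg0 y)).trans_le (hC y)
  rw [lintegral_weightedLaw hr hZ.aemeasurable hg hg0,
    lintegral_weightedLaw hr hZ.neg.aemeasurable hg hg0,
    integral_eq_lintegral_pos_part_sub_lintegral_neg_part hint, sub_nonpos]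
  simp only [Pi.neg_apply, mul_neg]
  exact ENNReal.toReal_le_toReal hint.lintegral_lt_top.ne hint.neg.lintegral_lt_top.ne

theorem weightedLaw_le_iff (hr : Measurable r) (hZ : Integrable Z Q) :
    weightedLaw Q r Z ≤ weightedLaw Q r (-Z) ↔ ∀ A, MeasurableSet A →
      ∫ ω, A.indicator (fun _ => (1 : ℝ)) (r ω) * Z ω ∂Q ≤ 0 := by
  refine Measure.le_iff.trans (forall₂_congr fun A hA => ?_)
  have hind : ∀ ν : Measure Y,
      ∫⁻ y, ENNReal.ofReal (A.indicator (fun _ => (1 : ℝ)) y) ∂ν = ν A := fun ν => by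
    rw [← lintegral_indicator_one hA]
    exact lintegral_congr fun y => by by_cases hy : y ∈ A <;> simp [hy]
  rw [integral_comp_mul_nonpos_iff hr hZ (measurable_const.indicator hA)
    (indicator_nonneg fun _ _ => zero_le_one)
    (indicator_le_self' (fun _ _ => zero_le_one)), hind, hind]

theorem integral_comp_mul_nonpos (hr : Measurable r) (hZ : Integrable Z Q)
    (h : ∀ A, MeasurableSet A → ∫ ω, A.indicator (fun _ => (1 : ℝ)) (r ω) * Z ω ∂Q ≤ 0)
    {g : Y → ℝ} (hg : Measurable g) (hg0 : ∀ y, 0 ≤ g y) {C : ℝ} (hC : ∀ y, g y ≤ C) :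
    ∫ ω, g (r ω) * Z ω ∂Q ≤ 0 :=
  (integral_comp_mul_nonpos_iff hr hZ hg hg0 hC).2
    (lintegral_mono' ((weightedLaw_le_iff hr hZ).2 h) le_rfl)

theorem integral_indicator_mul_nonpos_of_continuous [TopologicalSpace Y]
    [TopologicalSpace.PseudoMetrizableSpace Y] [BorelSpace Y] (hr : Measurable r)
    (hZ : Integrable Z Q)
    (h : ∀ g : Y → ℝ, Continuous g → (∀ y, g y ∈ Icc 0 1) → ∫ ω, g (r ω) * Z ω ∂Q ≤ 0)
    {A : Set Y} (hA : MeasurableSet A) :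
    ∫ ω, A.indicator (fun _ => (1 : ℝ)) (r ω) * Z ω ∂Q ≤ 0 := by
  have := isFiniteMeasure_weightedLaw (r := r) hZ
  have := isFiniteMeasure_weightedLaw (r := r) hZ.neg
  refine (weightedLaw_le_iff hr hZ).1
    (measure_le_of_forall_boundedContinuous_lintegral_le fun f hf => ?_) A hA
  have hfc : Continuous fun y => (f y : ℝ) := NNReal.continuous_coe.comp f.continuous
  have hf1 : ∀ y, (f y : ℝ) ≤ 1 := fun y => mod_cast hf y
  simpa using (integral_comp_mul_nonpos_iff hr hZ hfc.measurable (fun y => (f y).2) hf1).1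
    (h _ hfc fun y => ⟨(f y).2, hf1 y⟩)

end WeightedLaw

section Calls

variable {μ ν : Measure ℝ}

theorem integrable_call [IsFiniteMeasure μ] (h : Integrable (fun x => x) μ) (K : ℝ) :
    Integrable (fun x => max (x - K) 0) μ :=
  (h.sub (integrable_const K)).pos_part

theorem tendsto_integral_call_atTop (h : Integrable (fun x => x) μ) :
    Tendsto (fun K => ∫ x, max (x - K) 0 ∂μ) atTop (𝓝 0) := by
  have hbound : ∀ᶠ K : ℝ in atTop, ∀ᵐ x ∂μ, ‖max (x - K) 0‖ ≤ |x| := by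
    filter_upwards [eventually_ge_atTop 0] with K hK
    filter_upwards with x
    rw [Real.norm_of_nonneg (le_max_right _ _)]
    exact max_le (by linarith [le_abs_self x]) (abs_nonneg x)
  have hlim : ∀ x : ℝ, Tendsto (fun K => max (x - K) 0) atTop (𝓝 0) := fun x =>
    tendsto_const_nhds.congr' <| (eventually_ge_atTop x).mono fun K hK =>
      (max_eq_right (sub_nonpos.2 hK)).symm
  simpa using tendsto_integral_filter_of_dominated_convergence (fun x => |x|)
    (Eventually.of_forall fun K => (by fun_prop : Continuous _).aestronglyMeasurable) hbound h.abs
    (Eventually.of_forall hlim)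

theorem callSpread_div_mem_Icc (x K : ℝ) {d : ℝ} (hd : 0 < d) :
    (max (x - K) 0 - max (x - (K + d)) 0) / d ∈ Icc (0 : ℝ) 1 := by
  refine ⟨div_nonneg ?_ hd.le, (div_le_one hd).2 ?_⟩ <;> grind

theorem tendsto_callSpread_div (x K : ℝ) :
    Tendsto (fun d => (max (x - K) 0 - max (x - (K + d)) 0) / d) (𝓝[>] 0)
      (𝓝 ((Ioi K).indicator 1 x)) := by
  refine tendsto_const_nhds.congr' ?_
  rcases le_or_gt x K with hx | hx
  · filter_upwards [self_mem_nhdsWithin] with d hd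
    rw [mem_Ioi] at hd
    simp [hx, (by linarith : x ≤ K + d)]
  · filter_upwards [Ioo_mem_nhdsGT (sub_pos.2 hx)] with d hd
    rw [indicator_of_mem (mem_Ioi.2 hx), Pi.one_apply, max_eq_left (by linarith),
      max_eq_left (by linarith [hd.2]), eq_div_iff hd.1.ne']
    ring

theorem tendsto_integral_callSpread_div [IsFiniteMeasure μ] (h : Integrable (fun x => x) μ)
    (K : ℝ) : Tendsto (fun d => (∫ x, max (x - K) 0 ∂μ - ∫ x, max (x - (K + d)) 0 ∂μ) / d)
      (𝓝[>] 0) (𝓝 (μ.real (Ioi K))) := by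
  simp_rw [← integral_sub (integrable_call h _) (integrable_call h _), ← integral_div]
  rw [← integral_indicator_one measurableSet_Ioi]
  refine tendsto_integral_filter_of_dominated_convergence (fun _ => (1 : ℝ))
    (Eventually.of_forall fun d => (by fun_prop : Continuous _).aestronglyMeasurable)
    ?_ (integrable_const _) (Eventually.of_forall fun x => tendsto_callSpread_div x K)
  filter_upwards [self_mem_nhdsWithin] with d hd
  filter_upwards with x
  have hmem := callSpread_div_mem_Icc x K hd
  rw [Real.norm_of_nonneg hmem.1]
  exact hmem.2

theorem measure_eq_of_integral_call_eq [IsProbabilityMeasure μ] [IsProbabilityMeasure ν]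
    (hμ : Integrable (fun x => x) μ) (hν : Integrable (fun x => x) ν)
    (hμ0 : μ (Iio 0) = 0) (hν0 : ν (Iio 0) = 0)
    (h : ∀ K : ℝ, 0 ≤ K → ∫ x, max (x - K) 0 ∂μ = ∫ x, max (x - K) 0 ∂ν) : μ = ν := by
  refine Measure.ext_of_Iic _ _ fun K => ?_
  rcases lt_or_ge K 0 with hK | hK
  · rw [measure_mono_null (Iic_subset_Iio.2 hK) hμ0, measure_mono_null (Iic_subset_Iio.2 hK) hν0]
  · have htail : μ.real (Ioi K) = ν.real (Ioi K) := by
      refine tendsto_nhds_unique (tendsto_integral_callSpread_div hμ K)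
        ((tendsto_integral_callSpread_div hν K).congr' ?_)
      filter_upwards [self_mem_nhdsWithin] with d hd
      rw [h K hK, h _ (add_nonneg hK (le_of_lt hd))]
    rw [← compl_Ioi, prob_compl_eq_one_sub measurableSet_Ioi,
      prob_compl_eq_one_sub measurableSet_Ioi, (measureReal_eq_measureReal_iff).1 htail]

end Calls

section LowerSemicontinuous

variable {X : Type*} [PseudoEMetricSpace X] {P : Set X} {φ : X → ℝ≥0∞}

/-- The infimal convolution of `φ` on `P` with `k * edist`, capped at `k`: for `φ` lower
semicontinuous on `P` these bounded Lipschitz functions increase to `φ` there. -/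
def lipschitzMinorant (P : Set X) (φ : X → ℝ≥0∞) (k : ℕ) (x : X) : ℝ≥0∞ :=
  min k (⨅ y ∈ P, φ y + k * edist x y)

theorem lipschitzMinorant_le_natCast (k : ℕ) (x : X) : lipschitzMinorant P φ k x ≤ k :=
  min_le_left _ _

theorem lipschitzMinorant_ne_top (k : ℕ) (x : X) : lipschitzMinorant P φ k x ≠ ∞ :=
  ne_top_of_le_ne_top (ENNReal.natCast_ne_top k) (lipschitzMinorant_le_natCast k x)

theorem lipschitzMinorant_le (k : ℕ) {x : X} (hx : x ∈ P) : lipschitzMinorant P φ k x ≤ φ x :=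
  (min_le_right _ _).trans <| (iInf₂_le x hx).trans (by simp)

theorem monotone_lipschitzMinorant (x : X) : Monotone fun k => lipschitzMinorant P φ k x :=
  fun k l hkl => by
    have : (k : ℝ≥0∞) ≤ l := mod_cast hkl
    exact min_le_min this (iInf₂_mono fun y _ => by gcongr)

theorem lipschitzMinorant_le_add_edist (k : ℕ) (x y : X) :
    lipschitzMinorant P φ k x ≤ lipschitzMinorant P φ k y + k * edist x y := by
  rw [lipschitzMinorant, lipschitzMinorant, min_add]
  refine min_le_min le_self_add ?_
  simp_rw [ENNReal.iInf_add]
  refine iInf₂_mono fun z _ => ?_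
  calc φ z + k * edist x z ≤ φ z + k * (edist x y + edist y z) := by
        gcongr
        exact edist_triangle x y z
    _ = φ z + k * edist y z + k * edist x y := by ring

theorem continuous_lipschitzMinorant (k : ℕ) : Continuous (lipschitzMinorant P φ k) :=
  continuous_of_le_add_edist k (ENNReal.natCast_ne_top k) (lipschitzMinorant_le_add_edist k)

theorem iSup_lipschitzMinorant (hφ : LowerSemicontinuousOn φ P) {x : X} (hx : x ∈ P) :
    ⨆ k, lipschitzMinorant P φ k x = φ x := by
  refine le_antisymm (iSup_le fun k => lipschitzMinorant_le k hx) ?_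
  refine le_of_forall_lt_imp_le_of_dense fun a ha => ?_
  obtain ⟨ε, hε, hball⟩ := EMetric.mem_nhdsWithin_iff.1 (hφ x hx a ha)
  have ha_top : a ≠ ∞ := ne_top_of_lt ha
  obtain ⟨k, hk⟩ := ENNReal.exists_nat_gt (max_lt ha_top.lt_top
    (ENNReal.div_lt_top ha_top hε.ne')).ne
  rw [max_lt_iff] at hk
  refine le_iSup_of_le k (le_min hk.1.le (le_iInf₂ fun y hy => ?_))
  rcases lt_or_ge (edist y x) ε with hyx | hyx
  · exact (hball ⟨hyx, hy⟩ : a < φ y).le.trans le_self_add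
  · calc a ≤ k * ε :=
          (ENNReal.div_le_iff_le_mul (.inl hε.ne') (.inr (pos_of_gt hk.2).ne')).1 hk.2.le
      _ ≤ k * edist x y := by rw [edist_comm]; gcongr
      _ ≤ φ y + k * edist x y := le_add_self

variable [MeasurableSpace X] [BorelSpace X] {Q : Measure X}

theorem aemeasurable_of_lowerSemicontinuousOn (hP : ∀ᵐ x ∂Q, x ∈ P)
    (hφ : LowerSemicontinuousOn φ P) : AEMeasurable φ Q :=
  ⟨fun x => ⨆ k, lipschitzMinorant P φ k x,
    .iSup fun k => (continuous_lipschitzMinorant k).measurable,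
    hP.mono fun _ hx => (iSup_lipschitzMinorant hφ hx).symm⟩

theorem lintegral_le_of_forall_continuous_minorant (hP : ∀ᵐ x ∂Q, x ∈ P)
    (hφ : LowerSemicontinuousOn φ P) {b : ℝ≥0∞}
    (h : ∀ (g : C(X, ℝ≥0)) (C : ℝ≥0), (∀ x, g x ≤ C) → (∀ x ∈ P, g x ≤ φ x) →
      ∫⁻ x, g x ∂Q ≤ b) :
    ∫⁻ x, φ x ∂Q ≤ b := by
  rw [lintegral_congr_ae (hP.mono fun _ hx => (iSup_lipschitzMinorant hφ hx).symm),
    lintegral_iSup (fun k => (continuous_lipschitzMinorant k).measurable)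
      fun _ _ hkl x => monotone_lipschitzMinorant x hkl]
  refine iSup_le fun k => ?_
  have hcont : Continuous fun x => (lipschitzMinorant P φ k x).toNNReal :=
    ENNReal.continuousOn_toNNReal.comp_continuous (continuous_lipschitzMinorant k)
      (lipschitzMinorant_ne_top k)
  have hcoe : ∀ x, ((lipschitzMinorant P φ k x).toNNReal : ℝ≥0∞) = lipschitzMinorant P φ k x :=
    fun x => ENNReal.coe_toNNReal (lipschitzMinorant_ne_top k x)
  simpa [hcoe] using h ⟨_, hcont⟩ k
    (fun x => ENNReal.toNNReal_mono (ENNReal.natCast_ne_top k) (lipschitzMinorant_le_natCast k x))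
    fun x hx => (hcoe x).trans_le (lipschitzMinorant_le k hx)

end LowerSemicontinuous

section ExtendedExpectation

theorem posE_eq_toENNReal : posE = EReal.toENNReal := rfl

variable {n : ℕ} {Q : Measure (Path n)}

theorem eexpE_mono {f g : Path n → EReal} (h : ∀ᵐ ω ∂Q, f ω ≤ g ω) : eexpE Q f ≤ eexpE Q g := by
  rw [eexpE, eexpE, posE_eq_toENNReal]
  refine EReal.sub_le_sub (EReal.coe_ennreal_le_coe_ennreal_iff.2 (lintegral_mono_ae ?_))
    (EReal.coe_ennreal_le_coe_ennreal_iff.2 (lintegral_mono_ae ?_))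
  · filter_upwards [h] with ω hω using EReal.toENNReal_le_toENNReal hω
  · filter_upwards [h] with ω hω using EReal.toENNReal_le_toENNReal (EReal.neg_le_neg_iff.2 hω)

theorem eexpE_coe {f : Path n → ℝ} (hf : Integrable f Q) :
    eexpE Q (fun ω => (f ω : EReal)) = ((∫ ω, f ω ∂Q : ℝ) : EReal) := by
  simp only [eexpE, posE_eq_toENNReal, ← EReal.coe_neg, EReal.toENNReal_of_ne_top
    (EReal.coe_ne_top _), EReal.toReal_coe]
  rw [integral_eq_lintegral_pos_part_sub_lintegral_neg_part hf, EReal.coe_sub,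
    EReal.coe_ennreal_toReal, EReal.coe_ennreal_toReal]
  · exact hf.neg.lintegral_lt_top.ne
  · exact hf.lintegral_lt_top.ne

theorem coe_le_toENNReal_sub_iff {x : EReal} {a : ℝ} (hx : x ≤ a) (t : ℝ≥0) :
    (t : ℝ≥0∞) ≤ ((a : EReal) - x).toENNReal ↔ x ≤ ((a - t : ℝ) : EReal) := by
  induction x with
  | bot => simp
  | top => simp at hx
  | coe y =>
    rw [EReal.coe_le_coe_iff] at hx
    rw [← EReal.coe_sub, EReal.real_coe_toENNReal, EReal.coe_le_coe_iff,
      ← ENNReal.ofReal_coe_nnreal,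
      ENNReal.ofReal_le_ofReal_iff (sub_nonneg.2 hx), le_sub_comm]

theorem coe_sub_toReal_toENNReal_sub {x : EReal} {a : ℝ} (hx : x ≤ a)
    (h : ((a : EReal) - x).toENNReal ≠ ∞) :
    ((a - ((a : EReal) - x).toENNReal.toReal : ℝ) : EReal) = x := by
  induction x with
  | bot => simp at h
  | top => simp at hx
  | coe y =>
    rw [EReal.coe_le_coe_iff] at hx
    rw [← EReal.coe_sub, EReal.real_coe_toENNReal, ENNReal.toReal_ofReal (sub_nonneg.2 hx),
      sub_sub_cancel]

variable {P : Set (Path n)} {F : C(Path n, ℝ)} {H : Path n → EReal}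

theorem lowerSemicontinuousOn_toENNReal_sub (hH : UpperSemicontinuousOn H P) :
    LowerSemicontinuousOn (fun ω => ((F ω : EReal) - H ω).toENNReal) P := by
  have hneg : LowerSemicontinuousOn (fun ω => -H ω) P :=
    continuous_neg.comp_upperSemicontinuousOn_antitone hH fun _ _ => EReal.neg_le_neg_iff.2
  refine EReal.continuous_toENNReal.comp_lowerSemicontinuousOn ?_
    fun _ _ => EReal.toENNReal_le_toENNReal
  exact (continuous_coe_real_ereal.comp F.continuous).lowerSemicontinuous.lowerSemicontinuousOn
    _ |>.add' hneg fun ω _ =>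
      EReal.continuousAt_add (.inl (EReal.coe_ne_top _)) (.inl (EReal.coe_ne_bot _))

theorem le_eexpE_of_forall_le_integral (hQP : ∀ᵐ ω ∂Q, ω ∈ P) [IsFiniteMeasure Q]
    (hF : Integrable F Q) (hH : UpperSemicontinuousOn H P) (hHF : ∀ ω ∈ P, H ω ≤ (F ω : EReal))
    {v : ℝ} (hv : ∀ (g : C(Path n, ℝ≥0)) (C : ℝ≥0), (∀ ω, g ω ≤ C) →
      (∀ ω ∈ P, H ω ≤ ((F ω - g ω : ℝ) : EReal)) → v ≤ ∫ ω, (F ω - g ω) ∂Q) :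
    (v : EReal) ≤ eexpE Q H := by
  set φ : Path n → ℝ≥0∞ := fun ω => ((F ω : EReal) - H ω).toENNReal
  have hφ := lowerSemicontinuousOn_toENNReal_sub (F := F) hH
  have hle : ∫⁻ ω, φ ω ∂Q ≤ ENNReal.ofReal (∫ ω, F ω ∂Q - v) := by
    refine lintegral_le_of_forall_continuous_minorant hQP hφ fun g C hgC hgφ => ?_
    have hg : Integrable (fun ω => (g ω : ℝ)) Q :=
      .of_bound (by fun_prop) (C : ℝ) (Eventually.of_forall fun ω => by simpa using hgC ω)
    have := hv g C hgC fun ω hω =>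
      (coe_le_toENNReal_sub_iff (hHF ω hω) (g ω)).1 (hgφ ω hω)
    rw [integral_sub hF hg] at this
    rw [lintegral_coe_eq_integral _ hg]
    exact ENNReal.ofReal_le_ofReal (by linarith)
  have hfin : ∫⁻ ω, φ ω ∂Q ≠ ∞ := ne_top_of_le_ne_top ENNReal.ofReal_ne_top hle
  have hφm := aemeasurable_of_lowerSemicontinuousOn hQP hφ
  have hφint : Integrable (fun ω => (φ ω).toReal) Q :=
    integrable_toReal_of_lintegral_ne_top hφm hfin
  have hφ_toReal : ∀ᵐ ω ∂Q, ((F ω - (φ ω).toReal : ℝ) : EReal) = H ω := by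
    filter_upwards [hQP, ae_lt_top' hφm hfin] with ω hω hω'
    exact coe_sub_toReal_toENNReal_sub (hHF ω hω) hω'.ne
  have hv0 : 0 ≤ ∫ ω, F ω ∂Q - v := sub_nonneg.2 <| by
    simpa using hv 0 0 (fun _ => le_rfl) (by simpa using hHF)
  calc (v : EReal) ≤ ((∫ ω, (F ω - (φ ω).toReal) ∂Q : ℝ) : EReal) := by
        rw [integral_sub hF hφint, integral_toReal hφm (ae_lt_top' hφm hfin), EReal.coe_le_coe_iff,
          le_sub_comm]
        exact ENNReal.toReal_le_of_le_ofReal hv0 hle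
    _ = eexpE Q fun ω => ((F ω - (φ ω).toReal : ℝ) : EReal) := (eexpE_coe (hF.sub hφint)).symm
    _ ≤ eexpE Q H := eexpE_mono (hφ_toReal.mono fun _ h => h.le)

end ExtendedExpectation

section Portfolios

variable {n : ℕ}

theorem Static.exists_add (X Y : Static n) : ∃ Z : Static n,
    Z.callPayoff = X.callPayoff + Y.callPayoff ∧ ∀ c, Z.price c = X.price c + Y.price c := by
  refine ⟨⟨X.const + Y.const, X.m + Y.m, Fin.append X.coeff Y.coeff, Fin.append X.idx Y.idx,
    Fin.append X.strike Y.strike, fun k => ?_⟩, funext fun ω => ?_, fun c => ?_⟩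
  · refine Fin.addCases (fun i => ?_) (fun i => ?_) k
    · simpa using X.strike_nonneg i
    · simpa using Y.strike_nonneg i
  · simp only [Static.callPayoff, Fin.sum_univ_add, Fin.append_left, Fin.append_right,
      Pi.add_apply]
    ring
  · simp only [Static.price, Fin.sum_univ_add, Fin.append_left, Fin.append_right]
    ring

theorem Static.exists_smul (a : ℝ) (X : Static n) : ∃ Z : Static n,
    Z.callPayoff = a • X.callPayoff ∧ ∀ c, Z.price c = a * X.price c := by
  refine ⟨⟨a * X.const, X.m, a • X.coeff, X.idx, X.strike, X.strike_nonneg⟩,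
    funext fun ω => ?_, fun c => ?_⟩
  · simp only [Static.callPayoff, Pi.smul_apply, smul_eq_mul, mul_add, Finset.mul_sum, mul_assoc]
  · simp only [Static.price, Pi.smul_apply, smul_eq_mul, mul_add, Finset.mul_sum, mul_assoc]

/-- The pairs (payoff, price) of the static call portfolios at unit prices `c`. -/
def staticClaims (c : Fin n → ℝ → ℝ) : Submodule ℝ ((Path n → ℝ) × ℝ) where
  carrier := {z | ∃ X : Static n, X.callPayoff = z.1 ∧ X.price c = z.2}
  zero_mem' := ⟨⟨0, 0, 0, Fin.elim0, 0, fun _ => le_rfl⟩, by ext; simp [Static.callPayoff],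
    by simp [Static.price]⟩
  add_mem' := by
    rintro ⟨_, _⟩ ⟨_, _⟩ ⟨X, rfl, rfl⟩ ⟨Y, rfl, rfl⟩
    obtain ⟨Z, hZ, hZc⟩ := X.exists_add Y
    exact ⟨Z, hZ, hZc c⟩
  smul_mem' := by
    rintro a ⟨_, _⟩ ⟨X, rfl, rfl⟩
    obtain ⟨Z, hZ, hZc⟩ := X.exists_smul a
    exact ⟨Z, hZ, hZc c⟩

theorem const_mem_staticClaims (c : Fin n → ℝ → ℝ) (a : ℝ) :
    (fun _ => a, a) ∈ staticClaims c :=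
  ⟨⟨a, 0, 0, Fin.elim0, 0, fun _ => le_rfl⟩, by ext; simp [Static.callPayoff],
    by simp [Static.price]⟩

theorem call_mem_staticClaims (c : Fin n → ℝ → ℝ) (i : Fin n) {K : ℝ} (hK : 0 ≤ K) :
    (fun ω => max (ω i.succ - K) 0, c i K) ∈ staticClaims c :=
  ⟨⟨0, 1, 1, fun _ => i, fun _ => K, fun _ => hK⟩, by ext; simp [Static.callPayoff],
    by simp [Static.price]⟩

theorem sum_call_mem_staticClaims (c : Fin n → ℝ → ℝ) {K : ℝ} (hK : 0 ≤ K) :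
    (fun ω => ∑ i : Fin n, max (ω i.succ - K) 0, ∑ i, c i K) ∈ staticClaims c := by
  convert sum_mem fun i (_ : i ∈ Finset.univ) => call_mem_staticClaims c i hK
  · simp [Prod.fst_sum]
  · simp [Prod.snd_sum]

/-- The gains of the dynamic strategies without short selling. -/
def gainsCone (n : ℕ) : PointedCone ℝ (Path n → ℝ) where
  carrier := {g | ∃ D : Dyn n, D.Nonneg ∧ D.gains = g}
  zero_mem' := ⟨⟨0, fun _ => measurable_const, fun _ => ⟨0, by simp⟩⟩, fun _ _ => le_rfl,
    by ext; simp [Dyn.gains]⟩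
  add_mem' := by
    rintro _ _ ⟨D, hD, rfl⟩ ⟨E, hE, rfl⟩
    refine ⟨⟨D.pos + E.pos, fun j => (D.meas j).add (E.meas j), fun j => ?_⟩,
      fun j x => add_nonneg (hD j x) (hE j x), ?_⟩
    · obtain ⟨C, hC⟩ := D.bdd j
      obtain ⟨C', hC'⟩ := E.bdd j
      exact ⟨C + C', fun x => (abs_add_le _ _).trans (add_le_add (hC x) (hC' x))⟩
    · ext ω
      simp only [Dyn.gains, Pi.add_apply, ← Finset.sum_add_distrib, add_mul]
  smul_mem' := by
    rintro a _ ⟨D, hD, rfl⟩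
    refine ⟨⟨(a : ℝ) • D.pos, fun j => (D.meas j).const_smul (a : ℝ), fun j => ?_⟩,
      fun j x => mul_nonneg a.2 (hD j x), ?_⟩
    · obtain ⟨C, hC⟩ := D.bdd j
      refine ⟨a * C, fun x => ?_⟩
      simp only [Pi.smul_apply, smul_eq_mul, abs_mul, abs_of_nonneg a.2]
      exact mul_le_mul_of_nonneg_left (hC x) a.2
    · ext ω
      change _ = (a : ℝ) * _
      simp only [Dyn.gains, Pi.smul_apply, smul_eq_mul, Finset.mul_sum, mul_assoc]

theorem single_mem_gainsCone (j : Fin n) {g : (Fin j → ℝ) → ℝ} (hg : Measurable g)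
    (hg0 : ∀ y, 0 ≤ g y) {C : ℝ} (hC : ∀ y, g y ≤ C) :
    (fun ω => g (restr j ω) * (ω j.succ - ω j.castSucc)) ∈ gainsCone n := by
  refine ⟨⟨Pi.single j g, fun k => ?_, fun k => ⟨C, fun x => ?_⟩⟩, fun k x => ?_, ?_⟩
  · rcases eq_or_ne k j with rfl | hk
    · simpa
    · rw [Pi.single_eq_of_ne hk]
      exact measurable_zero
  · rcases eq_or_ne k j with rfl | hk
    · simpa [abs_of_nonneg (hg0 _)] using hC x
    · simpa [hk] using (hg0 0).trans (hC 0)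
  · rcases eq_or_ne k j with rfl | hk
    · simpa using hg0 x
    · simp [hk]
  · ext ω
    rw [Dyn.gains, Finset.sum_eq_single j (by simp +contextual) (by simp)]
    simp

end Portfolios

section LinearGrowth

open CompactlySupported

variable {n : ℕ} {s₀ : ℝ} {P : Set (Path n)} {c : Fin n → ℝ → ℝ}

/-- The weight `1 + ‖ω‖` measuring linear growth on the path space. -/
def pathWeight (n : ℕ) : C(Path n, ℝ) := ⟨fun ω => 1 + ‖ω‖, by fun_prop⟩

@[simp]
theorem pathWeight_apply (ω : Path n) : pathWeight n ω = 1 + ‖ω‖ := rfl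

theorem one_le_pathWeight (ω : Path n) : 1 ≤ pathWeight n ω :=
  le_add_of_nonneg_right (norm_nonneg ω)

/-- The continuous payoffs of linear growth. -/
abbrev LinGrowth (n : ℕ) : Submodule ℝ C(Path n, ℝ) := growthSpace (pathWeight n)

theorem mem_linGrowth_of_abs_le {f : C(Path n, ℝ)} {C : ℝ} (h : ∀ ω, |f ω| ≤ C * (1 + ‖ω‖)) :
    f ∈ LinGrowth n :=
  mem_growthSpace_iff.2 ⟨C, fun ω => by
    rw [abs_of_nonneg (zero_le_one.trans (one_le_pathWeight ω))]
    exact h ω⟩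

theorem mem_linGrowth_of_abs_le_const {f : C(Path n, ℝ)} {C : ℝ} (h : ∀ ω, |f ω| ≤ C) :
    f ∈ LinGrowth n :=
  mem_linGrowth_of_abs_le fun ω => (h ω).trans <|
    le_mul_of_one_le_right ((abs_nonneg _).trans (h ω)) (one_le_pathWeight ω)

theorem norm_le_add_sum_call {ω : Path n} (hω : ω ∈ Omega n s₀) {R : ℝ} (hR : 0 ≤ R)
    (hsR : s₀ ≤ R) : ‖ω‖ ≤ R + ∑ i : Fin n, max (ω i.succ - R) 0 := by
  have hnonneg : ∀ i : Fin n, 0 ≤ max (ω i.succ - R) 0 := fun i => le_max_right _ _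
  have hsum := Finset.sum_nonneg fun i (_ : i ∈ Finset.univ) => hnonneg i
  refine (pi_norm_le_iff_of_nonneg (by positivity)).2 fun i => ?_
  rw [Real.norm_of_nonneg (hω.2 i)]
  induction i using Fin.cases with
  | zero => linarith [hω.1]
  | succ i =>
    have := Finset.single_le_sum (fun i _ => hnonneg i) (Finset.mem_univ i)
    linarith [le_max_left (ω i.succ - R) 0]

/-- A cutoff equal to `1` where `‖ω‖ ≤ 2R` and to `0` where `2R + 1 ≤ ‖ω‖`. -/
def cutoff (n : ℕ) (R : ℝ) : C_c(Path n, ℝ) where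
  toFun ω := max 0 (min 1 (2 * R + 1 - ‖ω‖))
  continuous_toFun := by fun_prop
  hasCompactSupport' := .intro (isCompact_closedBall 0 (2 * R + 1)) fun ω hω => by
    rw [mem_closedBall_zero_iff, not_le] at hω
    exact max_eq_left (min_le_of_right_le (by linarith))

theorem cutoff_apply (R : ℝ) (ω : Path n) :
    cutoff n R ω = max 0 (min 1 (2 * R + 1 - ‖ω‖)) := rfl

theorem cutoff_mem_Icc (R : ℝ) (ω : Path n) : cutoff n R ω ∈ Icc 0 1 :=
  ⟨le_max_left _ _, max_le zero_le_one (min_le_left _ _)⟩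

theorem cutoff_eq_one {R : ℝ} {ω : Path n} (h : ‖ω‖ ≤ 2 * R) : cutoff n R ω = 1 := by
  rw [cutoff_apply, min_eq_left (by linarith), max_eq_right zero_le_one]

theorem tendsto_cutoff (ω : Path n) : Tendsto (fun k : ℕ => cutoff n k ω) atTop (𝓝 1) :=
  tendsto_const_nhds.congr' <| (tendsto_natCast_atTop_atTop.eventually_ge_atTop ‖ω‖).mono
    fun k hk => (cutoff_eq_one (hk.trans (by linarith [(Nat.cast_nonneg k : (0 : ℝ) ≤ k)]))).symm

theorem pathWeight_mul_one_sub_cutoff_le {ω : Path n} (hω : ω ∈ Omega n s₀) {R : ℝ} (hR : 1 ≤ R)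
    (hsR : s₀ ≤ R) :
    pathWeight n ω - pathWeight n ω * cutoff n R ω ≤ 3 * ∑ i : Fin n, max (ω i.succ - R) 0 := by
  have hsum : 0 ≤ ∑ i : Fin n, max (ω i.succ - R) 0 := Finset.sum_nonneg fun i _ => le_max_right _ _
  rcases le_or_gt ‖ω‖ (2 * R) with h | h
  · simpa [cutoff_eq_one h]
  · have hnorm := norm_le_add_sum_call hω (zero_le_one.trans hR) hsR
    have := mul_nonneg (zero_le_one.trans (one_le_pathWeight ω)) (cutoff_mem_Icc R ω).1
    rw [pathWeight_apply] at *
    linarith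

/-- The pairs `(f, a)` such that `f` is superhedged on `P` at price `a`. -/
def superhedgeCone (c : Fin n → ℝ → ℝ) (P : Set (Path n)) : PointedCone ℝ (LinGrowth n × ℝ) where
  carrier := {z | ∃ φ, (φ, z.2) ∈ staticClaims c ∧ ∃ g ∈ gainsCone n,
    ∀ ω ∈ P, z.1.1 ω ≤ φ ω + g ω}
  zero_mem' := ⟨0, zero_mem _, 0, zero_mem _, fun _ _ => by simp⟩
  add_mem' := by
    rintro z z' ⟨φ, hφ, g, hg, h⟩ ⟨φ', hφ', g', hg', h'⟩
    refine ⟨φ + φ', add_mem hφ hφ', g + g', add_mem hg hg', fun ω hω => ?_⟩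
    have := add_le_add (h ω hω) (h' ω hω)
    simpa [add_add_add_comm] using this
  smul_mem' := by
    rintro a z ⟨φ, hφ, g, hg, h⟩
    refine ⟨(a : ℝ) • φ, (staticClaims c).smul_mem (a : ℝ) hφ, (a : ℝ) • g,
      (gainsCone n).smul_mem a.2 hg, fun ω hω => ?_⟩
    have := mul_le_mul_of_nonneg_left (h ω hω) a.2
    rw [mul_add] at this
    exact this

theorem mem_superhedgeCone_of_le {f : LinGrowth n} {φ : Path n → ℝ} {a : ℝ}
    (hφ : (φ, a) ∈ staticClaims c) (h : ∀ ω ∈ P, f.1 ω ≤ φ ω) : (f, a) ∈ superhedgeCone c P :=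
  ⟨φ, hφ, 0, zero_mem _, by simpa using h⟩

theorem mem_superhedgeCone_of_nonpos {f : LinGrowth n} (h : ∀ ω ∈ P, f.1 ω ≤ 0) :
    (f, 0) ∈ superhedgeCone c P :=
  mem_superhedgeCone_of_le (zero_mem (staticClaims c)) h

theorem exists_mem_superhedgeCone (hP : P ⊆ Omega n s₀) (f : LinGrowth n) :
    ∃ a, (f, a) ∈ superhedgeCone c P := by
  obtain ⟨C, hC0, hC⟩ := growthSpace.exists_abs_le one_le_pathWeight f
  refine ⟨_, mem_superhedgeCone_of_le ((staticClaims c).smul_mem C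
    (add_mem (const_mem_staticClaims c (1 + |s₀|)) (sum_call_mem_staticClaims c (abs_nonneg s₀))))
    fun ω hω => ?_⟩
  have hnorm := norm_le_add_sum_call (hP hω) (abs_nonneg s₀) (le_abs_self s₀)
  calc f.1 ω ≤ C * (1 + ‖ω‖) := (le_abs_self _).trans (hC ω)
    _ ≤ C * (1 + |s₀| + ∑ i : Fin n, max (ω i.succ - |s₀|) 0) := by
      rw [add_assoc]
      gcongr

end LinearGrowth

section PricingMeasure

variable {n : ℕ} {s₀ : ℝ} {P : Set (Path n)} {c : Fin n → ℝ → ℝ}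

/-- A measure under which no payoff of linear growth is worth more than a superhedge of it on
`P`. -/
structure IsPricingMeasure (c : Fin n → ℝ → ℝ) (P : Set (Path n)) (Q : Measure (Path n)) :
    Prop where
  integrable (f : LinGrowth n) : Integrable f.1 Q
  integral_le {f : LinGrowth n} {a : ℝ} : (f, a) ∈ superhedgeCone c P → ∫ ω, f.1 ω ∂Q ≤ a

/-- Since calls of large strike cost almost nothing, no mass escapes to infinity. -/
theorem exists_isPricingMeasure_of_linearMap (hc : CondC3 c) (hP : P ⊆ Omega n s₀)
    {L : LinGrowth n →ₗ[ℝ] ℝ} (hL : ∀ z ∈ superhedgeCone c P, L z.1 ≤ z.2) :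
    ∃ Q, IsPricingMeasure c P Q ∧ ∀ f : LinGrowth n, ∫ ω, f.1 ω ∂Q = L f := by
  have hpos : ∀ f : LinGrowth n, (∀ ω, 0 ≤ f.1 ω) → 0 ≤ L f := fun f hf => by
    simpa using hL (-f, 0) (mem_superhedgeCone_of_nonpos fun ω _ => by simpa using hf ω)
  have hcalls : Tendsto (fun k : ℕ => 3 * ∑ i, c i k) atTop (𝓝 0) := by
    simpa using (tendsto_finsetSum Finset.univ fun i _ =>
      (hc i).comp tendsto_natCast_atTop_atTop).const_mul 3
  set W : LinGrowth n := ⟨pathWeight n, Asymptotics.isBigO_refl _ ⊤⟩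
  let T : ℕ → LinGrowth n := fun k => compactlySupportedInclusion one_le_pathWeight
    (truncate (cutoff n k) (pathWeight n))
  have htail : ∀ᶠ k : ℕ in atTop, L W - 3 * ∑ i, c i k ≤ L (T k) := by
    filter_upwards [tendsto_natCast_atTop_atTop.eventually_ge_atTop (max 1 s₀)] with k hk
    have := hL (W - T k, 3 * ∑ i, c i k) <| mem_superhedgeCone_of_le
      ((staticClaims c).smul_mem 3 (sum_call_mem_staticClaims c k.cast_nonneg))
      fun ω hω => pathWeight_mul_one_sub_cutoff_le (hP hω) ((le_max_left _ _).trans hk)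
        ((le_max_right _ _).trans hk)
    rw [map_sub] at this
    linarith
  have htight : Tendsto (fun k => L (T k)) atTop (𝓝 (L W)) := by
    refine tendsto_of_tendsto_of_tendsto_of_le_of_le' (by simpa using hcalls.const_sub (L W))
      tendsto_const_nhds htail
      (Eventually.of_forall fun k => growthSpace.map_le_map hpos fun ω => ?_)
    exact mul_le_of_le_one_right (zero_le_one.trans (one_le_pathWeight ω)) (cutoff_mem_Icc _ ω).2
  obtain ⟨Q, hQ⟩ := exists_measure_integral_eq one_le_pathWeight hpos
    (fun k => cutoff_mem_Icc (k : ℝ)) tendsto_cutoff htight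
  exact ⟨Q, ⟨fun f => (hQ f).1, fun {f a} hfa => (hQ f).2.trans_le (hL _ hfa)⟩, fun f => (hQ f).2⟩

theorem le_of_mem_superhedgeCone {H : Path n → EReal} {v : ℝ}
    (hv : (v : EReal) ≤ V Static.callPayoff c P H) {f : LinGrowth n}
    (hf : ∀ ω ∈ P, H ω ≤ (f.1 ω : EReal)) {a : ℝ} (ha : (f, a) ∈ superhedgeCone c P) : v ≤ a := by
  obtain ⟨_, ⟨X, rfl, rfl⟩, _, ⟨D, hD, rfl⟩, h⟩ := ha
  exact EReal.coe_le_coe_iff.1 <| hv.trans <|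
    sInf_le ⟨X, D, hD, rfl, fun ω hω => (hf ω hω).trans (EReal.coe_le_coe_iff.2 (h ω hω))⟩

theorem exists_isPricingMeasure (hc : CondC3 c) (hP : P ⊆ Omega n s₀) {H : Path n → EReal}
    {F : LinGrowth n} (hF : ∀ ω ∈ P, H ω ≤ (F.1 ω : EReal)) {v : ℝ}
    (hv : (v : EReal) ≤ V Static.callPayoff c P H) :
    ∃ Q, IsPricingMeasure c P Q ∧
      ∀ f : LinGrowth n, (∀ ω ∈ P, H ω ≤ (f.1 ω : EReal)) → v ≤ ∫ ω, f.1 ω ∂Q := by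
  let U : Set (LinGrowth n) := {f | ∀ ω ∈ P, H ω ≤ (f.1 ω : EReal)}
  have hU : Convex ℝ U := by
    intro f hf g hg a b ha hb hab ω hω
    have hconv : Convex ℝ {x : ℝ | H ω ≤ x} :=
      (ordConnected_Ici.preimage_mono fun _ _ h => EReal.coe_le_coe_iff.2 h).convex
    exact hconv (hf ω hω) (hg ω hω) ha hb hab
  obtain ⟨L, hLS, hLU⟩ := exists_linearMap_between (superhedgeCone c P)
    (hU.prod (convex_singleton v)) ⟨(F, v), hF, rfl⟩ (exists_mem_superhedgeCone hP) (by
      rintro ⟨f, _⟩ ⟨hf, rfl⟩ a ha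
      exact le_of_mem_superhedgeCone hv hf ha)
  obtain ⟨Q, hQ, hQL⟩ := exists_isPricingMeasure_of_linearMap hc hP hLS
  exact ⟨Q, hQ, fun f hf => (hLU (f, v) ⟨hf, rfl⟩).trans_eq (hQL f).symm⟩

namespace IsPricingMeasure

variable {Q : Measure (Path n)} (hQ : IsPricingMeasure c P Q)
include hQ

theorem integral_eq_of_mem_staticClaims {f : LinGrowth n} {a : ℝ}
    (hf : ((f.1 : Path n → ℝ), a) ∈ staticClaims c) : ∫ ω, f.1 ω ∂Q = a := by
  refine le_antisymm (hQ.integral_le (mem_superhedgeCone_of_le hf fun _ _ => le_rfl)) ?_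
  have := hQ.integral_le (f := -f) (a := -a)
    (mem_superhedgeCone_of_le (neg_mem hf) fun _ _ => le_rfl)
  simp only [NegMemClass.coe_neg, ContinuousMap.neg_apply, integral_neg] at this
  linarith

theorem isProbabilityMeasure : IsProbabilityMeasure Q := by
  let f : LinGrowth n := ⟨.const _ 1, mem_linGrowth_of_abs_le_const (C := 1) (by simp)⟩
  have hint : Integrable (fun _ => (1 : ℝ)) Q := hQ.integrable f
  have := ((integrable_const_iff_isFiniteMeasure one_ne_zero).1 hint)
  have hone := hQ.integral_eq_of_mem_staticClaims (f := f) (const_mem_staticClaims c 1)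
  simpa [f, isProbabilityMeasure_iff_real] using hone

theorem nonempty : P.Nonempty := by
  by_contra! hP
  let f : LinGrowth n := ⟨.const _ 1, mem_linGrowth_of_abs_le_const (C := 1) (by simp)⟩
  have hle := hQ.integral_le (f := f) (mem_superhedgeCone_of_nonpos (by simp [hP]))
  have := hQ.integral_eq_of_mem_staticClaims (f := f) (const_mem_staticClaims c 1)
  linarith

theorem ae_mem (hP : IsClosed P) : ∀ᵐ ω ∂Q, ω ∈ P := by
  let f : LinGrowth n := ⟨⟨fun ω => min 1 (Metric.infDist ω P), by fun_prop⟩,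
    mem_linGrowth_of_abs_le_const (C := 1) fun ω => by
      simp [abs_of_nonneg, Metric.infDist_nonneg]⟩
  have hf0 : ∀ ω, 0 ≤ f.1 ω := fun ω => le_min zero_le_one Metric.infDist_nonneg
  have hle : ∫ ω, f.1 ω ∂Q ≤ 0 := hQ.integral_le <| mem_superhedgeCone_of_nonpos fun ω hω =>
    min_le_of_right_le (Metric.infDist_zero_of_mem hω).le
  have hae := (integral_eq_zero_iff_of_nonneg hf0 (hQ.integrable f)).1
    (le_antisymm hle (integral_nonneg hf0))
  filter_upwards [hae] with ω hω
  rw [hP.mem_iff_infDist_zero hQ.nonempty]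
  have : min 1 (Metric.infDist ω P) = 0 := hω
  grind

end IsPricingMeasure

end PricingMeasure

section Calibration

variable {n : ℕ} {s₀ : ℝ} {P : Set (Path n)}

theorem continuous_restr (j : Fin n) : Continuous (restr j) :=
  continuous_pi fun _ => continuous_apply _

/-- The prices `c_i(K) = ∫ (x - K)⁺ dμ_i` of the call options. -/
def callPrice (μ : Fin n → Measure ℝ) (i : Fin n) (K : ℝ) : ℝ := ∫ x, max (x - K) 0 ∂(μ i)

theorem condC3_callPrice {μ : Fin n → Measure ℝ} (hμ : ∀ i, Integrable (fun x => x) (μ i)) :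
    CondC3 (callPrice μ) :=
  fun i => tendsto_integral_call_atTop (hμ i)

theorem measure_eq_one_iff_ae_mem {Q : Measure (Path n)} [IsProbabilityMeasure Q]
    (hP : IsClosed P) : Q P = 1 ↔ ∀ᵐ ω ∂Q, ω ∈ P :=
  (mem_ae_iff_prob_eq_one hP.measurableSet).symm

theorem isClosed_Omega (n : ℕ) (s₀ : ℝ) : IsClosed (Omega n s₀) := by
  simp only [Omega, Set.ofPred_and, Set.ofPred_forall]
  exact (isClosed_eq (continuous_apply 0) continuous_const).inter
    (isClosed_iInter fun i => isClosed_le continuous_const (continuous_apply i))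

namespace IsPricingMeasure

variable {c : Fin n → ℝ → ℝ} {Q : Measure (Path n)}

theorem integrable_coord (hQ : IsPricingMeasure c P Q) (i : Fin (n + 1)) :
    Integrable (fun ω => ω i) Q :=
  hQ.integrable ⟨⟨fun ω => ω i, by fun_prop⟩, mem_linGrowth_of_abs_le (C := 1) fun ω => by
    have := norm_le_pi_norm ω i
    rw [Real.norm_eq_abs] at this
    simp only [ContinuousMap.coe_mk]
    linarith⟩

theorem integral_call (hQ : IsPricingMeasure c P Q) (i : Fin n) {K : ℝ} (hK : 0 ≤ K) :
    ∫ ω, max (ω i.succ - K) 0 ∂Q = c i K :=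
  hQ.integral_eq_of_mem_staticClaims (f := ⟨⟨fun ω => max (ω i.succ - K) 0, by fun_prop⟩,
    mem_linGrowth_of_abs_le (C := 1) fun ω => by
      have := norm_le_pi_norm ω i.succ
      rw [Real.norm_eq_abs] at this
      have h0 : 0 ≤ max (ω i.succ - K) 0 := le_max_right _ _
      simp only [ContinuousMap.coe_mk, abs_of_nonneg h0]
      grind⟩) (call_mem_staticClaims c i hK)

theorem isSupermartingaleLaw (hQ : IsPricingMeasure c P Q) : IsSupermartingaleLaw Q := by
  intro j A hA
  refine integral_indicator_mul_nonpos_of_continuous (continuous_restr j).measurable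
    ((hQ.integrable_coord j.succ).sub (hQ.integrable_coord j.castSucc))
    (fun g hg hg01 => ?_) hA
  have hgrowth : ∀ ω : Path n,
      |g (restr j ω) * (ω j.succ - ω j.castSucc)| ≤ 2 * (1 + ‖ω‖) := fun ω => by
    have hs := norm_le_pi_norm ω j.succ
    have hc := norm_le_pi_norm ω j.castSucc
    rw [Real.norm_eq_abs] at hs hc
    calc |g (restr j ω) * (ω j.succ - ω j.castSucc)|
        ≤ |ω j.succ - ω j.castSucc| := by
          rw [abs_mul, abs_of_nonneg (hg01 _).1]
          exact mul_le_of_le_one_left (abs_nonneg _) (hg01 _).2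
      _ ≤ 2 * (1 + ‖ω‖) := by linarith [abs_sub (ω j.succ) (ω j.castSucc)]
  exact hQ.integral_le (f := ⟨⟨fun ω => g (restr j ω) * (ω j.succ - ω j.castSucc), by
    have := continuous_restr j
    fun_prop⟩, mem_linGrowth_of_abs_le hgrowth⟩)
    ⟨0, zero_mem (staticClaims c), _, single_mem_gainsCone j hg.measurable (fun y => (hg01 y).1)
      fun y => (hg01 y).2, fun ω _ => by simp⟩

theorem map_eq (hPsub : P ⊆ Omega n s₀) (hP : IsClosed P) {μ : Fin n → Measure ℝ}
    (hQ : IsPricingMeasure (callPrice μ) P Q) {i : Fin n} [IsProbabilityMeasure (μ i)]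
    (hsupp : μ i (Iio 0) = 0) (hμ : Integrable (fun x => x) (μ i)) :
    Q.map (fun ω => ω i.succ) = μ i := by
  have hcoord : Measurable fun ω : Path n => ω i.succ := measurable_pi_apply _
  have := hQ.isProbabilityMeasure
  have := Measure.isProbabilityMeasure_map (μ := Q) hcoord.aemeasurable
  refine measure_eq_of_integral_call_eq
    ((integrable_map_measure (by fun_prop) hcoord.aemeasurable).2 (hQ.integrable_coord i.succ)) hμ
    ?_ hsupp fun K hK => ?_
  · rw [Measure.map_apply hcoord measurableSet_Iio]
    exact measure_mono_null (fun ω hω hωP => not_lt.2 ((hPsub hωP).2 i.succ) hω) (hQ.ae_mem hP)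
  · rw [integral_map hcoord.aemeasurable (by fun_prop), hQ.integral_call i hK]
    rfl

theorem mem_MSetP (hPsub : P ⊆ Omega n s₀) (hP : IsClosed P) {μ : Fin n → Measure ℝ}
    (hprob : ∀ i, IsProbabilityMeasure (μ i)) (hsupp : ∀ i, μ i (Iio 0) = 0)
    (hμ : ∀ i, Integrable (fun x => x) (μ i)) (hQ : IsPricingMeasure (callPrice μ) P Q) :
    Q ∈ MSetP s₀ μ P := by
  have := hQ.isProbabilityMeasure
  have hae := hQ.ae_mem hP
  exact ⟨⟨⟨this, (measure_eq_one_iff_ae_mem (isClosed_Omega n s₀)).2 (hae.mono hPsub),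
    fun i => hQ.map_eq hPsub hP (hsupp i) (hμ i)⟩, hQ.isSupermartingaleLaw⟩,
    (measure_eq_one_iff_ae_mem hP).2 hae⟩

end IsPricingMeasure

end Calibration

section WeakDuality

variable {n : ℕ} {s₀ : ℝ} {P : Set (Path n)} {μ : Fin n → Measure ℝ} {Q : Measure (Path n)}

theorem ae_eq_start_of_mem_PiMu (hQ : Q ∈ PiMu s₀ μ) : ∀ᵐ ω ∂Q, ω 0 = s₀ := by
  have := hQ.1
  exact ((measure_eq_one_iff_ae_mem (isClosed_Omega n s₀)).1 hQ.2.1).mono fun ω hω => hω.1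

theorem integrable_comp_coord_succ (hQ : Q ∈ PiMu s₀ μ) {i : Fin n} {f : ℝ → ℝ}
    (hf : Integrable f (μ i)) : Integrable (fun ω => f (ω i.succ)) Q := by
  rw [← hQ.2.2 i] at hf
  exact hf.comp_measurable (measurable_pi_apply _)

theorem integral_comp_coord_succ (hQ : Q ∈ PiMu s₀ μ) {i : Fin n} {f : ℝ → ℝ}
    (hf : Integrable f (μ i)) : ∫ ω, f (ω i.succ) ∂Q = ∫ x, f x ∂(μ i) := by
  rw [← hQ.2.2 i] at hf ⊢
  exact (integral_map (measurable_pi_apply _).aemeasurable hf.aestronglyMeasurable).symm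

theorem integrable_comp_coord (hQ : Q ∈ PiMu s₀ μ) {u : Fin (n + 1) → ℝ → ℝ}
    (hu : ∀ i : Fin n, Integrable (u i.succ) (μ i)) (i : Fin (n + 1)) :
    Integrable (fun ω => u i (ω i)) Q := by
  have := hQ.1
  induction i using Fin.cases with
  | zero =>
    exact (integrable_const (u 0 s₀)).congr <|
      (ae_eq_start_of_mem_PiMu hQ).mono fun ω hω => congrArg (u 0) hω.symm
  | succ i => exact integrable_comp_coord_succ hQ (hu i)

theorem integral_comp_start (hQ : Q ∈ PiMu s₀ μ) (f : ℝ → ℝ) : ∫ ω, f (ω 0) ∂Q = f s₀ := by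
  have := hQ.1
  rw [integral_congr_ae ((ae_eq_start_of_mem_PiMu hQ).mono fun ω hω => congrArg f hω)]
  simp

theorem integral_sum_comp_coord (hQ : Q ∈ PiMu s₀ μ) {u : Fin (n + 1) → ℝ → ℝ}
    (hu : ∀ i : Fin n, Integrable (u i.succ) (μ i)) :
    ∫ ω, ∑ i, u i (ω i) ∂Q = linGrowthCost s₀ μ u := by
  rw [integral_finsetSum _ fun i _ => integrable_comp_coord hQ hu i, Fin.sum_univ_succ,
    integral_comp_start hQ, linGrowthCost]
  simp only [integral_comp_coord_succ hQ (hu _)]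

theorem integrable_of_abs_le_linear {ν : Measure ℝ} [IsFiniteMeasure ν] (hν0 : ν (Iio 0) = 0)
    (hν : Integrable (fun x => x) ν) {u : ℝ → ℝ} (hu : Measurable u) {C : ℝ}
    (hC : ∀ x, 0 ≤ x → |u x| ≤ C * (1 + |x|)) : Integrable u ν :=
  (((integrable_const 1).add hν.abs).const_mul C).mono' hu.aestronglyMeasurable <|
    (measure_eq_zero_iff_ae_notMem.1 hν0).mono fun x hx => hC x (not_lt.1 hx)

theorem integrable_increment (hμ : ∀ i, Integrable (fun x => x) (μ i)) (hQ : Q ∈ PiMu s₀ μ)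
    (j : Fin n) : Integrable (fun ω => ω j.succ - ω j.castSucc) Q :=
  (integrable_comp_coord hQ (u := fun _ x => x) hμ j.succ).sub
    (integrable_comp_coord hQ (u := fun _ x => x) hμ j.castSucc)

theorem integrable_gain (hμ : ∀ i, Integrable (fun x => x) (μ i)) (hQ : Q ∈ PiMu s₀ μ)
    (D : Dyn n) (j : Fin n) :
    Integrable (fun ω => D.pos j (restr j ω) * (ω j.succ - ω j.castSucc)) Q :=
  integrable_comp_mul (continuous_restr j).measurable (integrable_increment hμ hQ j) (D.meas j)
    (D.bdd j).choose_spec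

theorem integral_increment_eq_zero (hμ : ∀ i, Integrable (fun x => x) (μ i)) (hQ : Q ∈ PiMu s₀ μ)
    (hmean : ∀ i, ∫ x, x ∂(μ i) = s₀) (j : Fin n) :
    ∫ ω, (ω j.succ - ω j.castSucc) ∂Q = 0 := by
  have hcoord := integrable_comp_coord hQ (u := fun _ x => x) hμ
  have hs : ∀ i : Fin (n + 1), ∫ ω, ω i ∂Q = s₀ :=
    Fin.cases (integral_comp_start hQ fun x => x)
      fun i => (integral_comp_coord_succ hQ (hμ i)).trans (hmean i)
  rw [integral_sub (hcoord _) (hcoord _), hs, hs, sub_self]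

theorem integral_gain_nonpos (hμ : ∀ i, Integrable (fun x => x) (μ i)) (hQ : Q ∈ MSet s₀ μ)
    (D : Dyn n) (j : Fin n) (hD : D.Nonneg ∨ ∀ i, ∫ x, x ∂(μ i) = s₀) :
    ∫ ω, D.pos j (restr j ω) * (ω j.succ - ω j.castSucc) ∂Q ≤ 0 := by
  have hrestr := (continuous_restr (n := n) j).measurable
  have hZ := integrable_increment hμ hQ.1 j
  obtain ⟨C, hC⟩ := D.bdd j
  rcases hD with hD | hmean
  · exact integral_comp_mul_nonpos hrestr hZ (hQ.2 j) (D.meas j) (hD j)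
      fun y => (le_abs_self _).trans (hC y)
  · -- Increments have mean zero, so adding `C` to the position changes nothing.
    have hshift : ∫ ω, (D.pos j (restr j ω) + C) * (ω j.succ - ω j.castSucc) ∂Q ≤ 0 :=
      integral_comp_mul_nonpos (g := fun y => D.pos j y + C) (C := C + C) hrestr hZ (hQ.2 j)
        ((D.meas j).add_const C) (fun y => by linarith [neg_le_of_abs_le (hC y)])
        fun y => by linarith [le_of_abs_le (hC y)]
    simpa [add_mul, integral_add (integrable_gain hμ hQ.1 D j) (hZ.const_mul C),
      integral_const_mul, integral_increment_eq_zero hμ hQ.1 hmean j] using hshift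

theorem integral_gains_nonpos (hμ : ∀ i, Integrable (fun x => x) (μ i)) (hQ : Q ∈ MSet s₀ μ)
    (D : Dyn n) (hD : D.Nonneg ∨ ∀ i, ∫ x, x ∂(μ i) = s₀) : ∫ ω, D.gains ω ∂Q ≤ 0 := by
  unfold Dyn.gains
  rw [integral_finsetSum _ fun j _ => integrable_gain hμ hQ.1 D j]
  exact Finset.sum_nonpos fun j _ => integral_gain_nonpos hμ hQ D j hD

theorem eexpE_le_linGrowthCost (hP : IsClosed P) (hμ : ∀ i, Integrable (fun x => x) (μ i))
    (hQ : Q ∈ MSetP s₀ μ P) {H : Path n → EReal} {u : Fin (n + 1) → ℝ → ℝ} {D : Dyn n}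
    (hu : ∀ i : Fin n, Integrable (u i.succ) (μ i))
    (hD : D.Nonneg ∨ ∀ i, ∫ x, x ∂(μ i) = s₀)
    (hH : ∀ ω ∈ P, H ω ≤ ((∑ i, u i (ω i) + D.gains ω : ℝ) : EReal)) :
    eexpE Q H ≤ (linGrowthCost s₀ μ u : EReal) := by
  have := hQ.1.1.1
  have hstatic : Integrable (fun ω => ∑ i, u i (ω i)) Q :=
    integrable_finsetSum _ fun i _ => integrable_comp_coord hQ.1.1 hu i
  have hgains : Integrable D.gains Q :=
    integrable_finsetSum _ fun j _ => integrable_gain hμ hQ.1.1 D j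
  calc eexpE Q H
      ≤ eexpE Q fun ω => ((∑ i, u i (ω i) + D.gains ω : ℝ) : EReal) :=
        eexpE_mono (((measure_eq_one_iff_ae_mem hP).1 hQ.2).mono hH)
    _ = ((∫ ω, ∑ i, u i (ω i) ∂Q + ∫ ω, D.gains ω ∂Q : ℝ) : EReal) := by
        rw [← integral_add hstatic hgains]
        exact eexpE_coe (hstatic.add hgains)
    _ ≤ (linGrowthCost s₀ μ u : EReal) := by
        rw [integral_sum_comp_coord hQ.1.1 hu]
        exact EReal.coe_le_coe (add_le_of_nonpos_right (integral_gains_nonpos hμ hQ.1 D hD))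

end WeakDuality

section StaticComponents

variable {n : ℕ} {s₀ : ℝ} {μ : Fin n → Measure ℝ}

/-- A static portfolio split by maturity: its cash position, as a function of `S₀`, and for each
`i` the combined payoff of its calls on `S_i`. -/
def Static.component (X : Static n) : Fin (n + 1) → ℝ → ℝ :=
  Fin.cons (fun _ => X.const)
    fun i x => ∑ k with X.idx k = i, X.coeff k * max (x - X.strike k) 0

theorem Static.measurable_component (X : Static n) (i : Fin (n + 1)) :
    Measurable (X.component i) := by
  induction i using Fin.cases with
  | zero => exact measurable_const
  | succ i =>
    change Measurable fun x => ∑ k with X.idx k = i, X.coeff k * max (x - X.strike k) 0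
    fun_prop

theorem Static.exists_abs_component_le (X : Static n) (i : Fin (n + 1)) :
    ∃ C, ∀ x, 0 ≤ x → |X.component i x| ≤ C * (1 + |x|) := by
  induction i using Fin.cases with
  | zero => exact ⟨|X.const|, fun x _ => le_mul_of_one_le_right (abs_nonneg _) (by simp)⟩
  | succ i =>
    refine ⟨∑ k with X.idx k = i, |X.coeff k|, fun x hx => ?_⟩
    have hcall : ∀ k, |max (x - X.strike k) 0| ≤ 1 + |x| := fun k => by
      have := X.strike_nonneg k
      grind
    calc |∑ k with X.idx k = i, X.coeff k * max (x - X.strike k) 0|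
        ≤ ∑ k with X.idx k = i, |X.coeff k * max (x - X.strike k) 0| :=
          Finset.abs_sum_le_sum_abs _ _
      _ ≤ ∑ k with X.idx k = i, |X.coeff k| * (1 + |x|) :=
          Finset.sum_le_sum fun k _ => (abs_mul _ _).trans_le <|
            mul_le_mul_of_nonneg_left (hcall k) (abs_nonneg _)
      _ = (∑ k with X.idx k = i, |X.coeff k|) * (1 + |x|) := (Finset.sum_mul ..).symm

theorem Static.sum_component (X : Static n) (ω : Path n) :
    ∑ i, X.component i (ω i) = X.callPayoff ω := by
  rw [Fin.sum_univ_succ]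
  simp only [component, callPayoff, Fin.cons_zero, Fin.cons_succ]
  rw [← Finset.sum_fiberwise Finset.univ X.idx]
  congr! 3 with i _ k hk
  rw [(Finset.mem_filter.1 hk).2]

theorem Static.linGrowthCost_component (hμ : ∀ i, Integrable (fun x => x) (μ i))
    [∀ i, IsFiniteMeasure (μ i)] (X : Static n) :
    linGrowthCost s₀ μ X.component = X.price (callPrice μ) := by
  have hcall : ∀ i (k : Fin X.m),
      Integrable (fun x => X.coeff k * max (x - X.strike k) 0) (μ i) :=
    fun i k => (integrable_call (hμ i) _).const_mul _
  simp only [linGrowthCost, component, price, callPrice, Fin.cons_zero, Fin.cons_succ]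
  rw [← Finset.sum_fiberwise Finset.univ X.idx]
  congr! 2 with i
  rw [integral_finsetSum _ fun k _ => hcall i k]
  refine Finset.sum_congr rfl fun k hk => ?_
  rw [integral_const_mul, (Finset.mem_filter.1 hk).2]

end StaticComponents

section Duality

variable {n : ℕ} {s₀ : ℝ} {P : Set (Path n)} {μ : Fin n → Measure ℝ} {H : Path n → EReal}

/-- The infimal cost of superhedging `H` on `P` by static functions `u_i` of linear growth and
nonnegative dynamic positions. As prices live in `ℝ₊`, the growth of `u_i` is controlled only
there. -/
def linGrowthV (s₀ : ℝ) (μ : Fin n → Measure ℝ) (P : Set (Path n)) (H : Path n → EReal) : EReal :=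
  sInf {q : EReal | ∃ (u : Fin (n + 1) → ℝ → ℝ) (D : Dyn n),
    (∀ i, Measurable (u i)) ∧ (∀ i, ∃ C : ℝ, ∀ x : ℝ, 0 ≤ x → |u i x| ≤ C * (1 + |x|)) ∧
    D.Nonneg ∧ q = (linGrowthCost s₀ μ u : EReal) ∧
    ∀ ω ∈ P, H ω ≤ ((∑ i : Fin (n + 1), u i (ω i) + D.gains ω : ℝ) : EReal)}

/-- The analogue of `linGrowthV` when the dynamic positions may take both signs. -/
def linGrowthVsigned (s₀ : ℝ) (μ : Fin n → Measure ℝ) (P : Set (Path n)) (H : Path n → EReal) :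
    EReal :=
  sInf {q : EReal | ∃ (u : Fin (n + 1) → ℝ → ℝ) (D : Dyn n),
    (∀ i, Measurable (u i)) ∧ (∀ i, ∃ C : ℝ, ∀ x : ℝ, 0 ≤ x → |u i x| ≤ C * (1 + |x|)) ∧
    q = (linGrowthCost s₀ μ u : EReal) ∧
    ∀ ω ∈ P, H ω ≤ ((∑ i : Fin (n + 1), u i (ω i) + D.gains ω : ℝ) : EReal)}

theorem Vsigned_le_V (pay : Static n → Path n → ℝ) (c : Fin n → ℝ → ℝ) (P : Set (Path n))
    (H : Path n → EReal) : Vsigned pay c P H ≤ V pay c P H :=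
  sInf_le_sInf fun _ ⟨X, D, _, h⟩ => ⟨X, D, h⟩

theorem linGrowthV_le_V [∀ i, IsFiniteMeasure (μ i)] (hμ : ∀ i, Integrable (fun x => x) (μ i)) :
    linGrowthV s₀ μ P H ≤ V Static.callPayoff (callPrice μ) P H := by
  refine sInf_le_sInf fun _ ⟨X, D, hD, hq, hX⟩ => ⟨X.component, D, X.measurable_component,
    X.exists_abs_component_le, hD, ?_, ?_⟩
  · rw [hq, X.linGrowthCost_component hμ]
  · simpa only [X.sum_component] using hX

theorem linGrowthVsigned_le_Vsigned [∀ i, IsFiniteMeasure (μ i)]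
    (hμ : ∀ i, Integrable (fun x => x) (μ i)) :
    linGrowthVsigned s₀ μ P H ≤ Vsigned Static.callPayoff (callPrice μ) P H := by
  refine sInf_le_sInf fun _ ⟨X, D, hq, hX⟩ => ⟨X.component, D, X.measurable_component,
    X.exists_abs_component_le, ?_, ?_⟩
  · rw [hq, X.linGrowthCost_component hμ]
  · simpa only [X.sum_component] using hX

theorem iSup_eexpE_le_linGrowthCost [∀ i, IsFiniteMeasure (μ i)] (hP : IsClosed P)
    (hμ0 : ∀ i, μ i (Iio 0) = 0) (hμ : ∀ i, Integrable (fun x => x) (μ i))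
    {u : Fin (n + 1) → ℝ → ℝ} {D : Dyn n} (hu : ∀ i, Measurable (u i))
    (hu' : ∀ i, ∃ C : ℝ, ∀ x : ℝ, 0 ≤ x → |u i x| ≤ C * (1 + |x|))
    (hD : D.Nonneg ∨ ∀ i, ∫ x, x ∂(μ i) = s₀)
    (hH : ∀ ω ∈ P, H ω ≤ ((∑ i, u i (ω i) + D.gains ω : ℝ) : EReal)) :
    ⨆ Q ∈ MSetP s₀ μ P, eexpE Q H ≤ (linGrowthCost s₀ μ u : EReal) :=
  iSup₂_le fun _ hQ => eexpE_le_linGrowthCost hP hμ hQ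
    (fun i => integrable_of_abs_le_linear (hμ0 i) (hμ i) (hu _) (hu' i.succ).choose_spec) hD hH

theorem iSup_eexpE_le_linGrowthV [∀ i, IsFiniteMeasure (μ i)] (hP : IsClosed P)
    (hμ0 : ∀ i, μ i (Iio 0) = 0) (hμ : ∀ i, Integrable (fun x => x) (μ i)) :
    ⨆ Q ∈ MSetP s₀ μ P, eexpE Q H ≤ linGrowthV s₀ μ P H :=
  le_sInf fun _ ⟨_, _, hu, hu', hD, hq, hH⟩ =>
    (iSup_eexpE_le_linGrowthCost hP hμ0 hμ hu hu' (.inl hD) hH).trans_eq hq.symm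

theorem iSup_eexpE_le_linGrowthVsigned [∀ i, IsFiniteMeasure (μ i)] (hP : IsClosed P)
    (hμ0 : ∀ i, μ i (Iio 0) = 0) (hμ : ∀ i, Integrable (fun x => x) (μ i))
    (hmean : ∀ i, ∫ x, x ∂(μ i) = s₀) :
    ⨆ Q ∈ MSetP s₀ μ P, eexpE Q H ≤ linGrowthVsigned s₀ μ P H :=
  le_sInf fun _ ⟨_, _, hu, hu', hq, hH⟩ =>
    (iSup_eexpE_le_linGrowthCost hP hμ0 hμ hu hu' (.inr hmean) hH).trans_eq hq.symm

theorem V_le_iSup_eexpE (hPsub : P ⊆ Omega n s₀) (hP : IsClosed P)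
    (hprob : ∀ i, IsProbabilityMeasure (μ i)) (hμ0 : ∀ i, μ i (Iio 0) = 0)
    (hμ : ∀ i, Integrable (fun x => x) (μ i)) (hH : UpperSemicontinuousOn H P) {C : ℝ}
    (hC : ∀ ω ∈ P, H ω ≤ ((C * (1 + ‖ω‖) : ℝ) : EReal)) :
    V Static.callPayoff (callPrice μ) P H ≤ ⨆ Q ∈ MSetP s₀ μ P, eexpE Q H := by
  refine EReal.ge_of_forall_gt_iff_ge.1 fun v hv => ?_
  let F : LinGrowth n := C • ⟨pathWeight n, Asymptotics.isBigO_refl _ ⊤⟩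
  obtain ⟨Q, hQ, hvQ⟩ := exists_isPricingMeasure (condC3_callPrice hμ) hPsub (F := F) hC hv.le
  have := hQ.isProbabilityMeasure
  refine le_iSup₂_of_le Q (hQ.mem_MSetP hPsub hP hprob hμ0 hμ) <|
    le_eexpE_of_forall_le_integral (hQ.ae_mem hP) (hQ.integrable F) hH hC fun g B hg hHg => ?_
  have hgB : ∀ ω, |(g ω : ℝ)| ≤ B := fun ω => by simpa using hg ω
  let g' : LinGrowth n :=
    ⟨⟨fun ω => g ω, by fun_prop⟩, mem_linGrowth_of_abs_le_const (C := B) hgB⟩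
  exact hvQ (F - g') hHg

theorem duality_calls_marginals_general (hPsub : P ⊆ Omega n s₀) (hP : IsClosed P)
    (hprob : ∀ i, IsProbabilityMeasure (μ i)) (hμ0 : ∀ i, μ i (Iio 0) = 0)
    (hμ : ∀ i, Integrable (fun x => x) (μ i)) (hH : UpperSemicontinuousOn H P) {C : ℝ}
    (hC : ∀ ω ∈ P, H ω ≤ ((C * (1 + ‖ω‖) : ℝ) : EReal)) :
    ((⨆ Q ∈ MSetP s₀ μ P, eexpE Q H) = linGrowthV s₀ μ P H ∧
      (⨆ Q ∈ MSetP s₀ μ P, eexpE Q H) = V Static.callPayoff (callPrice μ) P H) ∧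
    ((∀ i, ∫ x, x ∂(μ i) = s₀) →
      (⨆ Q ∈ MSetP s₀ μ P, eexpE Q H) = linGrowthVsigned s₀ μ P H ∧
      (⨆ Q ∈ MSetP s₀ μ P, eexpE Q H) = Vsigned Static.callPayoff (callPrice μ) P H) := by
  have hV := V_le_iSup_eexpE hPsub hP hprob hμ0 hμ hH hC
  have hlin : linGrowthV s₀ μ P H ≤ V Static.callPayoff (callPrice μ) P H := linGrowthV_le_V hμ
  have hweak : _ ≤ linGrowthV s₀ μ P H := iSup_eexpE_le_linGrowthV hP hμ0 hμ
  refine ⟨⟨hweak.antisymm (hlin.trans hV), (hweak.trans hlin).antisymm hV⟩, fun hmean => ?_⟩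
  have hVs := (Vsigned_le_V Static.callPayoff (callPrice μ) P H).trans hV
  have hlins : linGrowthVsigned s₀ μ P H ≤ _ := linGrowthVsigned_le_Vsigned hμ
  have hweaks : _ ≤ linGrowthVsigned s₀ μ P H := iSup_eexpE_le_linGrowthVsigned hP hμ0 hμ hmean
  exact ⟨hweaks.antisymm (hlins.trans hVs), (hweaks.trans hlins).antisymm hVs⟩

theorem upperSemicontinuousOn_comp_tailCoords (hP : P ⊆ Omega n s₀) {G : (Fin n → ℝ) → EReal}
    (hG : UpperSemicontinuousOn G {s | ∀ i, 0 ≤ s i}) :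
    UpperSemicontinuousOn (fun ω => G (tailCoords ω)) P :=
  hG.comp (continuous_pi fun _ => continuous_apply _).continuousOn
    fun _ hω i => (hP hω).2 i.succ

theorem mul_one_add_sum_le (K : ℝ) (ω : Path n) :
    K * (1 + ∑ i, tailCoords ω i) ≤ |K| * (1 + n) * (1 + ‖ω‖) := by
  have hsum : |∑ i, tailCoords ω i| ≤ n * ‖ω‖ := by
    simpa using Finset.abs_sum_le_sum_abs (tailCoords ω) Finset.univ |>.trans <|
      Finset.sum_le_card_nsmul _ _ ‖ω‖ fun i _ => norm_le_pi_norm ω i.succ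
  calc K * (1 + ∑ i, tailCoords ω i)
      ≤ |K| * |1 + ∑ i, tailCoords ω i| := (le_abs_self _).trans_eq (abs_mul _ _)
    _ ≤ |K| * (1 + n * ‖ω‖) := by
        gcongr
        exact (abs_add_le _ _).trans (by simpa using hsum)
    _ ≤ |K| * ((1 + n) * (1 + ‖ω‖)) := by
        gcongr
        nlinarith [norm_nonneg ω, (Nat.cast_nonneg n : (0 : ℝ) ≤ n)]
    _ = |K| * (1 + n) * (1 + ‖ω‖) := (mul_assoc ..).symm

end Duality

/-- Corollary 3.5: duality with general static functions of linear
growth, together with the superhedging price using call options; if all marginals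
have mean `s₀`, the same equalities hold with signed dynamic positions. -/
theorem duality_calls_marginals
    {n : ℕ} (hn : 1 ≤ n) {s₀ : ℝ} (hs₀ : 0 < s₀)
    (P : Set (Path n)) (hPsub : P ⊆ Omega n s₀) (hPclosed : IsClosed P)
    (μ : Fin n → Measure ℝ) (hprob : ∀ i, IsProbabilityMeasure (μ i))
    (hsupp : ∀ i, μ i (Set.Iio 0) = 0) (hmom : ∀ i, Integrable (fun x => x) (μ i))
    (hA : AssumptionA s₀ μ) (hne : (MSetP s₀ μ P).Nonempty)
    (G : (Fin n → ℝ) → EReal) (hGtop : ∀ s, G s ≠ ⊤)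
    (hGusc : UpperSemicontinuousOn G {s | ∀ i, 0 ≤ s i})
    (K : ℝ) (hG : ∀ s : Fin n → ℝ, (∀ i, 0 ≤ s i) → G s ≤ ((K * (1 + ∑ i, s i) : ℝ) : EReal)) :
    ((⨆ Q ∈ MSetP s₀ μ P, eexpE Q (fun ω => G (tailCoords ω))) =
      sInf {q : EReal | ∃ (u : Fin (n + 1) → ℝ → ℝ) (D : Dyn n),
        (∀ i, Measurable (u i)) ∧ (∀ i, ∃ C : ℝ, ∀ x : ℝ, 0 ≤ x → |u i x| ≤ C * (1 + |x|)) ∧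
        D.Nonneg ∧ q = (linGrowthCost s₀ μ u : EReal) ∧
        ∀ ω ∈ P, G (tailCoords ω) ≤
          ((∑ i : Fin (n + 1), u i (ω i) + D.gains ω : ℝ) : EReal)} ∧
     (⨆ Q ∈ MSetP s₀ μ P, eexpE Q (fun ω => G (tailCoords ω))) =
      V Static.callPayoff (fun i K' => ∫ x, max (x - K') 0 ∂(μ i)) P
        (fun ω => G (tailCoords ω))) ∧
    ((∀ i, ∫ x, x ∂(μ i) = s₀) →
      ((⨆ Q ∈ MSetP s₀ μ P, eexpE Q (fun ω => G (tailCoords ω))) =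
        sInf {q : EReal | ∃ (u : Fin (n + 1) → ℝ → ℝ) (D : Dyn n),
          (∀ i, Measurable (u i)) ∧ (∀ i, ∃ C : ℝ, ∀ x : ℝ, 0 ≤ x → |u i x| ≤ C * (1 + |x|)) ∧
          q = (linGrowthCost s₀ μ u : EReal) ∧
          ∀ ω ∈ P, G (tailCoords ω) ≤
            ((∑ i : Fin (n + 1), u i (ω i) + D.gains ω : ℝ) : EReal)} ∧
       (⨆ Q ∈ MSetP s₀ μ P, eexpE Q (fun ω => G (tailCoords ω))) =
        Vsigned Static.callPayoff (fun i K' => ∫ x, max (x - K') 0 ∂(μ i)) P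
          (fun ω => G (tailCoords ω)))) := by
  exact duality_calls_marginals_general hPsub hPclosed hprob hsupp hmom
    (upperSemicontinuousOn_comp_tailCoords hPsub hGusc) fun ω hω =>
      (hG _ fun i => (hPsub hω).2 i.succ).trans (EReal.coe_le_coe (mul_one_add_sum_le K ω))

end RobustFin
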